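/- arXiv:math/9907213 — 3 statements merged into one kernel-verified Lean document; each statement's English description precedes it below -/
import Mathlib

section
/- Suppose q ≠ 2, or q = 2 and T(T+1) ∤ M. Then: (1) the A-action defined by f · ψ_λ = Σ_i σ_{f_i} · ψ_λ, where f ≡ Σ_i f_i (mod M) with each gcd(f_i, M) = 1 and σ_{f_i} · ψ_λ is the conjugation action, is well-defined (independent of the decomposition) and gives an A-module structure on H_{M,z}, and consequently on H_{M,Γ}; (2) the image H_M of H_{M,z} in Λ_M is an A-submodule of Λ_M, the embedding H_{M,z} → H_M is an A-module isomorphism, and H_{M,z} and H_{M,Γ} are A-modules of exponent M (annihilated by M). -/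
open Polynomial IntermediateField

set_option synthInstance.maxHeartbeats 1000000
set_option maxHeartbeats 1000000

/-- `ψ` is the Carlitz module: the ring homomorphism `A = 𝔽_q[T] → End_{𝔽_q}(k̄, +)`
determined by `T ↦ (α ↦ Tα + α^q)` and `c ↦ (α ↦ cα)` for constants `c ∈ 𝔽_q`,
where `k̄` is the algebraic closure of `k = 𝔽_q(T)`. -/
def IsCarlitz {Fq : Type} [Field Fq] [Fintype Fq]
    (ψ : Polynomial Fq →+* AddMonoid.End (AlgebraicClosure (RatFunc Fq))) : Prop :=
  (∀ α, ψ X α = algebraMap (RatFunc Fq) (AlgebraicClosure (RatFunc Fq)) RatFunc.X * α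
      + α ^ Fintype.card Fq) ∧
  (∀ (c : Fq) (α), ψ (C c) α
      = algebraMap (RatFunc Fq) (AlgebraicClosure (RatFunc Fq)) (RatFunc.C c) * α)

/-- An automorphism `τ` of an intermediate field `E` of `k̄/k` fixes the `M`-torsion
points `Λ_M` pointwise; when `E ⊇ K = k(Λ_M)`, this says exactly `τ ∈ Gal(E/K)`. -/
def FixesTorsion {Fq : Type} [Field Fq] [Fintype Fq]
    (ψ : Polynomial Fq →+* AddMonoid.End (AlgebraicClosure (RatFunc Fq)))
    (M : Polynomial Fq)
    {E : IntermediateField (RatFunc Fq) (AlgebraicClosure (RatFunc Fq))}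
    (τ : ↥E ≃ₐ[RatFunc Fq] ↥E) : Prop :=
  ∀ x : ↥E, ψ M (x : AlgebraicClosure (RatFunc Fq)) = 0 → τ x = x

/-- An automorphism `s ∈ Gal(E/k)` is an extension of `σ_B ∈ Gal(K/k)`, i.e. it acts on
the `M`-torsion points `Λ_M ⊆ E` by `λ ↦ λ^B`. -/
def ExtendsSigma {Fq : Type} [Field Fq] [Fintype Fq]
    (ψ : Polynomial Fq →+* AddMonoid.End (AlgebraicClosure (RatFunc Fq)))
    (M : Polynomial Fq)
    {E : IntermediateField (RatFunc Fq) (AlgebraicClosure (RatFunc Fq))}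
    (s : ↥E ≃ₐ[RatFunc Fq] ↥E) (B : Polynomial Fq) : Prop :=
  ∀ x : ↥E, ψ M (x : AlgebraicClosure (RatFunc Fq)) = 0 →
    ((s x : AlgebraicClosure (RatFunc Fq))) = ψ B (x : AlgebraicClosure (RatFunc Fq))

/-- `c` is the `A`-action on `Gal(E/K)` defined via decompositions: for `f ∈ A` and
`τ ∈ Gal(E/K)`, whenever `f ≡ f_1 + ⋯ + f_n (mod M)` with all `gcd(f_i, M) = 1`, and
`s_i ∈ Gal(E/k)` is any extension of `σ_{f_i} ∈ Gal(K/k)`, one has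
`c f τ = Σ_i σ_{f_i} · τ`, where `σ_{f_i} · τ = s_i ∘ τ ∘ s_i⁻¹` is the conjugation
action (the sum being composition in the abelian group `Gal(E/K)`). -/
def IsDecompConjAction {Fq : Type} [Field Fq] [Fintype Fq]
    (ψ : Polynomial Fq →+* AddMonoid.End (AlgebraicClosure (RatFunc Fq)))
    (M : Polynomial Fq)
    {E : IntermediateField (RatFunc Fq) (AlgebraicClosure (RatFunc Fq))}
    (c : Polynomial Fq → (↥E ≃ₐ[RatFunc Fq] ↥E) → (↥E ≃ₐ[RatFunc Fq] ↥E)) : Prop :=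
  ∀ (f : Polynomial Fq) (τ : ↥E ≃ₐ[RatFunc Fq] ↥E), FixesTorsion ψ M τ →
    ∀ (n : ℕ) (g : Fin n → Polynomial Fq), (∀ i, IsCoprime (g i) M) →
      M ∣ (f - ∑ i, g i) →
      ∀ s : Fin n → (↥E ≃ₐ[RatFunc Fq] ↥E), (∀ i, ExtendsSigma ψ M (s i) (g i)) →
        c f τ = (List.ofFn (fun i => s i * τ * (s i)⁻¹)).prod

set_option linter.unusedSectionVars false

namespace CarlitzAux
lemma ind {Fq : Type} [Field Fq] {p : Fq[X] → Prop} (hC : ∀ a, p (C a)) (ha : ∀ f g, p f → p g → p (f + g))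
    (hX : ∀ f, p f → p (X * f)) (f : Fq[X]) : p f := by
  induction f using Polynomial.induction_on with
  | C a => exact hC a
  | add f g hf hg => exact ha _ _ hf hg
  | monomial n a h =>
    have : (C a * X ^ (n + 1) : Fq[X]) = X * (C a * X ^ n) := by ring
    rw [this]; exact hX _ h

section generic
variable (Fq : Type) [Field Fq] [Fintype Fq]
variable (R : Type*) [CommRing R] [Algebra Fq R] [Algebra Fq[X] R] [IsScalarTower Fq Fq[X] R]
variable (R' : Type*) [CommRing R'] [Algebra Fq R'] [Algebra Fq[X] R'] [IsScalarTower Fq Fq[X] R']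

/-- The operator `x ↦ T x + x^q`. -/
noncomputable def carlT : R →ₗ[Fq] R :=
  LinearMap.mulLeft Fq (algebraMap Fq[X] R X) + (FiniteField.frobeniusAlgHom Fq R).toLinearMap

/-- The Carlitz action on an arbitrary `A`-algebra. -/
noncomputable def carl : Fq[X] →ₐ[Fq] Module.End Fq R := aeval (carlT Fq R)

variable {Fq R R'}

lemma carl_X (x : R) : carl Fq R X x = algebraMap Fq[X] R X * x + x ^ Fintype.card Fq := by
  simp [carl, carlT]

lemma carl_C (c : Fq) (x : R) : carl Fq R (C c) x = algebraMap Fq[X] R (C c) * x := by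
  simp [carl, Algebra.smul_def, IsScalarTower.algebraMap_apply Fq Fq[X] R]

lemma carl_X_mul (f : Fq[X]) (x : R) : carl Fq R (X * f) x =
    algebraMap Fq[X] R X * carl Fq R f x + (carl Fq R f x) ^ Fintype.card Fq := by
  rw [map_mul, Module.End.mul_apply, carl_X]

lemma carl_map (h : R →ₐ[Fq[X]] R') (f : Fq[X]) (x : R) :
    h (carl Fq R f x) = carl Fq R' f (h x) := by
  induction f using ind with
  | hC a => simp only [carl_C, map_mul, AlgHom.commutes]
  | ha f g hf hg => simp [hf, hg]
  | hX f hf => rw [carl_X_mul, carl_X_mul, map_add, map_mul, map_pow, AlgHom.commutes, hf]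

variable (Fq) in
/-- The universal Carlitz polynomial. -/
noncomputable def cpoly (f : Fq[X]) : Fq[X][X] := carl Fq Fq[X][X] f X

lemma aeval_cpoly (f : Fq[X]) (x : R) : aeval x (cpoly Fq f) = carl Fq R f x := by
  rw [cpoly, carl_map, aeval_X]

lemma derivative_cpoly (f : Fq[X]) : derivative (cpoly Fq f) = C f := by
  have hq : ((Fintype.card Fq : ℕ) : Fq[X][X]) = 0 := by
    have : ((Fintype.card Fq : ℕ) : Fq) = 0 := by simp
    have h2 := congrArg (fun a => (C (C a) : Fq[X][X])) this
    simp only [map_natCast, map_zero] at h2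
    exact h2
  unfold cpoly
  induction f using ind with
  | hC a => rw [carl_C]; simp
  | ha f g hf hg => simp [hf, hg]
  | hX f hf =>
    rw [carl_X_mul]
    simp [derivative_pow, hf, hq]

lemma carl_eq_mul (f : Fq[X]) (x : R) :
    ∃ y : R, carl Fq R f x = x * (algebraMap Fq[X] R f + x * y) := by
  have h0 : (cpoly Fq f).coeff 0 = 0 := by
    have := aeval_cpoly f (0 : Fq[X])
    rw [map_zero] at this
    rw [← this, coeff_zero_eq_aeval_zero]
  have h1 : (cpoly Fq f).coeff 1 = f := by
    have := congrArg (fun p => p.coeff 0) (derivative_cpoly f)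
    simpa [coeff_derivative] using this
  obtain ⟨g, hg⟩ : ∃ g, cpoly Fq f = X * (C f + X * g) := by
    refine ⟨(cpoly Fq f).divX.divX, ?_⟩
    conv_lhs => rw [← divX_mul_X_add (cpoly Fq f), ← divX_mul_X_add (cpoly Fq f).divX]
    simp [h0, h1, coeff_divX]; ring
  refine ⟨aeval x g, ?_⟩
  rw [← aeval_cpoly, hg]; simp

lemma cpoly_degree (n : ℕ) : ∀ f : Fq[X], f ≠ 0 → f.natDegree = n →
    (cpoly Fq f).natDegree = Fintype.card Fq ^ n ∧
    (cpoly Fq f).leadingCoeff = C f.leadingCoeff := by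
  have hq1 : 1 < Fintype.card Fq := Fintype.one_lt_card
  induction n with
  | zero =>
    intro f hf hn
    rw [natDegree_eq_zero] at hn
    obtain ⟨a, rfl⟩ := hn
    have ha : a ≠ 0 := by simpa using hf
    have ha' : (C a : Fq[X]) ≠ 0 := hf
    unfold cpoly
    rw [carl_C]
    simp [natDegree_C_mul ha', leadingCoeff_mul]
  | succ n ih =>
    intro f hf hn
    have hd : f.divX ≠ 0 := by
      intro h; have := natDegree_divX_eq_natDegree_tsub_one (p := f)
      rw [divX_eq_zero_iff] at h
      rw [h] at hn; simp at hn
    have hdn : f.divX.natDegree = n := by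
      rw [natDegree_divX_eq_natDegree_tsub_one, hn]; simp
    obtain ⟨h1, h2⟩ := ih _ hd hdn
    have hl : f.divX.leadingCoeff = f.leadingCoeff := by
      rw [leadingCoeff, leadingCoeff, hdn, hn, coeff_divX]
    have key : cpoly Fq f = (C X * cpoly Fq f.divX + C (C (f.coeff 0)) * X) +
        cpoly Fq f.divX ^ Fintype.card Fq := by
      conv_lhs => rw [← divX_mul_X_add f]
      rw [mul_comm]
      unfold cpoly
      rw [map_add, LinearMap.add_apply, carl_X_mul, carl_C]
      simp; ring
    have hdeg : (cpoly Fq f.divX ^ Fintype.card Fq).natDegree = Fintype.card Fq ^ (n+1) := by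
      rw [natDegree_pow, h1]; ring
    have hlt : (C X * cpoly Fq f.divX + C (C (f.coeff 0)) * X : Fq[X][X]).natDegree <
        (cpoly Fq f.divX ^ Fintype.card Fq).natDegree := by
      rw [hdeg]
      refine (natDegree_add_le _ _).trans_lt (max_lt ?_ ?_)
      · refine (natDegree_C_mul_le _ _).trans_lt ?_
        rw [h1]; exact Nat.pow_lt_pow_right hq1 (by omega)
      · refine (natDegree_C_mul_le _ _).trans_lt ?_
        rw [natDegree_X]; exact Nat.one_lt_pow (by omega) hq1
    refine ⟨?_, ?_⟩
    · rw [key, natDegree_add_eq_right_of_natDegree_lt hlt, hdeg]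
    · rw [key, leadingCoeff_add_of_degree_lt (degree_lt_degree hlt), leadingCoeff_pow, h2, hl,
        ← C_pow, FiniteField.pow_card]

/-- Torsion points are integral. -/
lemma isIntegral_of_carl (f : Fq[X]) (hf : f ≠ 0) (x : R)
    (h : carl Fq R f x = 0) : IsIntegral Fq[X] x := by
  obtain ⟨h1, h2⟩ := cpoly_degree _ f hf rfl
  refine ⟨C (C f.leadingCoeff⁻¹) * cpoly Fq f, ?_, ?_⟩
  · have hl : f.leadingCoeff ≠ 0 := by simpa using hf
    rw [Monic, leadingCoeff_mul, h2, leadingCoeff_C, ← C_mul, inv_mul_cancel₀ hl, C_1]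
  · rw [← aeval_def, map_mul, aeval_cpoly, h, mul_zero]

end generic

/-- Modulo a monic prime `P`, the Carlitz action of `P` is the `q^d`-Frobenius. -/
lemma carl_prime_closed {Fq : Type} [Field Fq] [Fintype Fq] {L : Type*} [Field L] [IsAlgClosed L]
    [Algebra Fq L] [Algebra Fq[X] L] [IsScalarTower Fq Fq[X] L] (P : Fq[X]) (hP : Irreducible P)
    (hm : P.Monic) (h0 : algebraMap Fq[X] L P = 0) (x : L) :
    carl Fq L P x = x ^ (Fintype.card Fq ^ P.natDegree) := by
  classical
  obtain ⟨h1, h2⟩ := cpoly_degree _ P hP.ne_zero rfl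
  set g : L[X] := (cpoly Fq P).map (algebraMap Fq[X] L) with hg
  have hcm : (cpoly Fq P).Monic := by rw [Monic, h2, hm, C_1]
  have hgm : g.Monic := hcm.map _
  have hgd : g.natDegree = Fintype.card Fq ^ P.natDegree := by
    rw [hg, hcm.natDegree_map, h1]
  have hge : ∀ y, g.eval y = carl Fq L P y := by
    intro y; rw [hg, eval_map_algebraMap, aeval_cpoly]
  have hder : derivative g = 0 := by
    rw [hg, derivative_map, derivative_cpoly, map_C, h0, C_0]
  have hker : ∀ v, carl Fq L P v = 0 → v = 0 := by
    intro v hv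
    by_contra hne
    have hinj : ∀ f : Fq[X], carl Fq L f v = 0 → P ∣ f := by
      intro f hf
      by_contra hnd
      obtain ⟨a, b, hab⟩ := (hP.coprime_iff_not_dvd.mpr hnd)
      have := congrArg (fun r => carl Fq L r v) hab
      simp [map_add, map_mul, hf, hv] at this
      exact hne this.symm
    have hcard : Fintype.card Fq ^ P.natDegree ≤ g.roots.toFinset.card := by
      have : Fintype.card Fq ^ P.natDegree = Fintype.card (Fin P.natDegree → Fq) := by simp
      rw [this, ← Finset.card_univ]
      refine Finset.card_le_card_of_injOn
        (fun a => carl Fq L ((degreeLTEquiv Fq P.natDegree).symm a : Fq[X]) v) ?_ ?_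
      · intro a _
        simp only [Finset.mem_coe, Multiset.mem_toFinset, mem_roots hgm.ne_zero, IsRoot, hge]
        rw [← Module.End.mul_apply, ← map_mul, mul_comm, map_mul, Module.End.mul_apply, hv, map_zero]
      · intro a _ b _ hab
        have h3 : carl Fq L (((degreeLTEquiv Fq P.natDegree).symm a : Fq[X]) -
          ((degreeLTEquiv Fq P.natDegree).symm b : Fq[X])) v = 0 := by
          rw [map_sub, LinearMap.sub_apply, sub_eq_zero]; exact hab
        have h4 := hinj _ h3
        have h5 : ((degreeLTEquiv Fq P.natDegree).symm a : Fq[X]) -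
          ((degreeLTEquiv Fq P.natDegree).symm b : Fq[X]) = 0 := by
          refine eq_zero_of_dvd_of_degree_lt h4 ?_
          have := ((degreeLTEquiv Fq P.natDegree).symm a - (degreeLTEquiv Fq P.natDegree).symm b).2
          rw [mem_degreeLT] at this
          rw [degree_eq_natDegree hP.ne_zero]
          exact this
        have h6 := sub_eq_zero.mp h5
        exact (degreeLTEquiv Fq P.natDegree).symm.injective (Subtype.ext h6)
    have hnd : g.roots.Nodup := by
      rw [← Multiset.toFinset_card_eq_card_iff_nodup]
      refine le_antisymm (Multiset.toFinset_card_le _) ?_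
      exact (card_roots' g).trans (hgd.le.trans hcard)
    have hv' : v ∈ g.roots := by rw [mem_roots hgm.ne_zero, IsRoot, hge, hv]
    have := Multiset.nodup_iff_count_le_one.mp hnd v
    rw [count_roots] at this
    have h7 := (one_lt_rootMultiplicity_iff_isRoot hgm.ne_zero (t := v)).mpr
      ⟨by rw [IsRoot, hge, hv], by rw [hder]; simp⟩
    omega
  have hroots : g.roots = Multiset.replicate g.natDegree 0 := by
    rw [Multiset.eq_replicate]
    refine ⟨(IsAlgClosed.splits g).natDegree_eq_card_roots.symm, ?_⟩
    intro b hb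
    rw [mem_roots hgm.ne_zero, IsRoot, hge] at hb
    exact hker b hb
  have hgX : g = X ^ g.natDegree := by
    have := (IsAlgClosed.splits g).eq_prod_roots_of_monic hgm
    rw [hroots] at this
    simpa using this
  rw [← hge, hgX, hgd]; simp

lemma carl_prime {Fq : Type} [Field Fq] [Fintype Fq] {L : Type*} [Field L]
    [Algebra Fq L] [Algebra Fq[X] L] [IsScalarTower Fq Fq[X] L] (P : Fq[X]) (hP : Irreducible P)
    (hm : P.Monic) (h0 : algebraMap Fq[X] L P = 0) (x : L) :
    carl Fq L P x = x ^ (Fintype.card Fq ^ P.natDegree) := by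
  have := carl_prime_closed (L := AlgebraicClosure L) P hP hm
    (by rw [IsScalarTower.algebraMap_apply Fq[X] L, h0, map_zero]) (algebraMap _ _ x)
  have h2 := carl_map (IsScalarTower.toAlgHom Fq[X] L (AlgebraicClosure L)) P x
  apply (algebraMap L (AlgebraicClosure L)).injective
  rw [map_pow, ← this]; exact h2

end CarlitzAux

namespace CarlitzAux

lemma card_quot {Fq : Type} [Field Fq] [Fintype Fq] (P : Fq[X]) (hP : Irreducible P) :
    Nat.card (Fq[X] ⧸ Ideal.span {P}) = Fintype.card Fq ^ P.natDegree := by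
  have := (AdjoinRoot.powerBasis hP.ne_zero).finite
  have : Module.Finite Fq (Fq[X] ⧸ Ideal.span {P}) := this
  rw [Module.natCard_eq_pow_finrank (K := Fq), finrank_quotient_span_eq_natDegree,
    Nat.card_eq_fintype_card]

lemma frob {Fq : Type} [Field Fq] [Fintype Fq] {L : Type*} [Field L] [Algebra (RatFunc Fq) L]
    [Algebra Fq L] [Algebra Fq[X] L] [IsScalarTower Fq Fq[X] L] [IsScalarTower Fq[X] (RatFunc Fq) L]
    [FiniteDimensional (RatFunc Fq) L] [IsGalois (RatFunc Fq) L]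
    (M P : Fq[X]) (hM : M ≠ 0) (hP : Irreducible P) (hm : P.Monic) (hPM : ¬ P ∣ M) :
    ∃ σ : L ≃ₐ[RatFunc Fq] L, ∀ x, carl Fq L M x = 0 → σ x = carl Fq L P x := by
  let S := integralClosure Fq[X] L
  have : IsFractionRing S L :=
    IsIntegralClosure.isFractionRing_of_finite_extension Fq[X] (RatFunc Fq) L S
  let : MulSemiringAction Gal(L/RatFunc Fq) S :=
    IsIntegralClosure.MulSemiringAction Fq[X] (RatFunc Fq) L S
  have : SMulDistribClass Gal(L/RatFunc Fq) S L := inferInstance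
  have : Algebra.IsInvariant Fq[X] S Gal(L/RatFunc Fq) :=
    Algebra.isInvariant_of_isGalois Fq[X] (RatFunc Fq) L S
  have : Module.Finite Fq[X] S := IsIntegralClosure.finite Fq[X] (RatFunc Fq) L S
  have hprime : Prime P := hP.prime
  have : (Ideal.span {P}).IsMaximal := PrincipalIdealRing.isMaximal_of_irreducible hP
  have : FaithfulSMul Fq[X] L := by
    rw [faithfulSMul_iff_algebraMap_injective, IsScalarTower.algebraMap_eq Fq[X] (RatFunc Fq) L]
    exact (algebraMap (RatFunc Fq) L).injective.comp (IsFractionRing.injective Fq[X] (RatFunc Fq))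
  have : SMulCommClass Gal(L/RatFunc Fq) Fq[X] S := by
    refine ⟨fun g a s => ?_⟩
    exact map_smul (galRestrict Fq[X] (RatFunc Fq) L S g) a s
  obtain ⟨Q, hQm, hQ⟩ := Ideal.exists_maximal_ideal_liesOver_of_isIntegral (S := S) (Ideal.span {P})
  have hu : Q.under Fq[X] = Ideal.span {P} := hQ.over.symm
  have hPQ : algebraMap Fq[X] S P ∈ Q := by
    have : P ∈ Q.under Fq[X] := by rw [hu]; exact Ideal.mem_span_singleton_self P
    exact this
  have : Finite (Fq[X] ⧸ Ideal.span {P}) := by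
    apply Nat.finite_of_card_ne_zero
    rw [card_quot P hP]; exact pow_ne_zero _ Fintype.card_ne_zero
  have : Module.Finite (Fq[X] ⧸ Ideal.span {P}) (S ⧸ Q) :=
    Module.Finite.of_restrictScalars_finite Fq[X] _ _
  have : Finite (S ⧸ Q) := Module.finite_of_finite (Fq[X] ⧸ Ideal.span {P})
  obtain ⟨σ, hσ⟩ := IsArithFrobAt.exists_of_isInvariant Fq[X] Gal(L/RatFunc Fq) Q
  have hact : ∀ s : S, ((σ • s : S) : L) = σ s := fun s =>
    algebraMap_galRestrict_apply Fq[X] σ s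
  refine ⟨σ, fun x hx => ?_⟩
  let y : S := ⟨x, isIntegral_of_carl M hM x hx⟩
  have hy : carl Fq S M y = 0 := by
    apply Subtype.ext
    have := carl_map S.val M y
    exact this.trans hx
  -- the difference
  set w : S := σ • y - carl Fq S P y with hw
  have hwQ : w ∈ Q := by
    have h1 : σ • y - y ^ Nat.card (Fq[X] ⧸ Q.under Fq[X]) ∈ Q := hσ y
    rw [hu, card_quot P hP] at h1
    let : Field (S ⧸ Q) := Ideal.Quotient.field Q
    have h2 : carl Fq (S ⧸ Q) P (Ideal.Quotient.mk Q y) =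
        (Ideal.Quotient.mk Q y) ^ (Fintype.card Fq ^ P.natDegree) := by
      refine carl_prime P hP hm ?_ _
      exact Ideal.Quotient.eq_zero_iff_mem.mpr hPQ
    have h3 := carl_map (Ideal.Quotient.mkₐ Fq[X] Q) P y
    have h4 : Ideal.Quotient.mk Q (carl Fq S P y) =
        (Ideal.Quotient.mk Q y) ^ (Fintype.card Fq ^ P.natDegree) := h3.trans h2
    rw [← map_pow, Ideal.Quotient.eq] at h4
    have : w = (σ • y - y ^ (Fintype.card Fq ^ P.natDegree)) -
      (carl Fq S P y - y ^ (Fintype.card Fq ^ P.natDegree)) := by rw [hw]; ring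
    rw [this]; exact Q.sub_mem h1 h4
  have hwM : carl Fq S M w = 0 := by
    rw [hw, map_sub]
    have e1 : carl Fq S M (σ • y) = 0 := by
      have := carl_map ((galRestrict Fq[X] (RatFunc Fq) L S σ : S ≃ₐ[Fq[X]] S) : S →ₐ[Fq[X]] S) M y
      rw [hy, map_zero] at this
      exact this.symm
    have e2 : carl Fq S M (carl Fq S P y) = 0 := by
      rw [← Module.End.mul_apply, ← map_mul, mul_comm, map_mul, Module.End.mul_apply, hy, map_zero]
    rw [e1, e2, sub_zero]
  have hw0 : w = 0 := by
    obtain ⟨v, hv⟩ := carl_eq_mul M w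
    rw [hwM] at hv
    rcases mul_eq_zero.mp hv.symm with h | h
    · exact h
    · exfalso
      have : algebraMap Fq[X] S M ∈ Q := by
        rw [eq_neg_of_add_eq_zero_left h]
        exact Q.neg_mem (Q.mul_mem_right _ hwQ)
      have h5 : M ∈ Q.under Fq[X] := this
      rw [hu, Ideal.mem_span_singleton] at h5
      exact hPM h5
  have h6 : σ • y = carl Fq S P y := sub_eq_zero.mp hw0
  have h7 := congrArg (fun s : S => (s : L)) h6
  have h8 := carl_map S.val P y
  exact (hact y).symm.trans (h7.trans h8)

end CarlitzAux

namespace CarlitzAux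

/-- CRT step: `f` is a sum of two units mod `M` if locally solvable. -/
lemma two_units {Fq : Type} [Field Fq] (M f : Fq[X]) (hM : M ≠ 0)
    (h : ∀ P : Fq[X], Irreducible P → P ∣ M → ∃ r, ¬ P ∣ r ∧ ¬ P ∣ f - r) :
    ∃ g, IsCoprime g M ∧ IsCoprime (f - g) M := by
  classical
  let s := (UniqueFactorizationMonoid.normalizedFactors M).toFinset
  have hs : ∀ P ∈ s, Irreducible P ∧ P ∣ M ∧ normalize P = P := by
    intro P hP
    rw [Multiset.mem_toFinset] at hP
    exact ⟨UniqueFactorizationMonoid.irreducible_of_normalized_factor P hP,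
      UniqueFactorizationMonoid.dvd_of_mem_normalizedFactors hP,
      UniqueFactorizationMonoid.normalize_normalized_factor P hP⟩
  choose r hr1 hr2 using fun P : s => h P.1 (hs P.1 P.2).1 (hs P.1 P.2).2.1
  obtain ⟨g, hg⟩ := Ideal.exists_forall_sub_mem_ideal (R := Fq[X]) (ι := s)
    (I := fun P => Ideal.span {P.1}) (by
      intro P Q hPQ
      change IsCoprime (Ideal.span {P.1}) (Ideal.span {Q.1})
      rw [Ideal.isCoprime_span_singleton_iff, (hs P.1 P.2).1.coprime_iff_not_dvd]
      intro hd
      apply hPQ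
      have hass : Associated P.1 Q.1 :=
        (hs P.1 P.2).1.associated_of_dvd (hs Q.1 Q.2).1 hd
      have := normalize_eq_normalize_iff_associated.mpr hass
      rw [(hs P.1 P.2).2.2, (hs Q.1 Q.2).2.2] at this
      exact Subtype.ext this) r
  have key : ∀ w : Fq[X], (∀ P ∈ s, ¬ P ∣ w) → IsCoprime w M := by
    intro w hw
    refine isCoprime_of_prime_dvd (fun h => hM h.2) ?_
    intro P hP hPw hPM
    obtain ⟨Q, hQ, hPQ⟩ := UniqueFactorizationMonoid.exists_mem_normalizedFactors_of_dvd hM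
      hP.irreducible hPM
    exact hw Q (by rw [Multiset.mem_toFinset]; exact hQ) (hPQ.dvd_iff_dvd_left.mp hPw)
  refine ⟨g, key _ ?_, key _ ?_⟩
  · intro P hP hd
    have h1 := hg ⟨P, hP⟩
    rw [Ideal.mem_span_singleton] at h1
    apply hr1 ⟨P, hP⟩
    have := dvd_sub hd h1
    simpa using this
  · intro P hP hd
    have h1 := hg ⟨P, hP⟩
    rw [Ideal.mem_span_singleton] at h1
    apply hr2 ⟨P, hP⟩
    have := dvd_add hd h1
    simpa using this

lemma local_sol {Fq : Type} [Field Fq] (P f a b : Fq[X]) (ha : ¬ P ∣ a) (hb : ¬ P ∣ b)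
    (hab : ¬ P ∣ a - b) : ∃ r, ¬ P ∣ r ∧ ¬ P ∣ f - r := by
  by_cases h : P ∣ f - a
  · refine ⟨b, hb, fun h2 => hab ?_⟩
    have := dvd_sub h2 h
    simpa using this
  · exact ⟨a, ha, h⟩

lemma exists_decomp {Fq : Type} [Field Fq] [Fintype Fq] (M : Fq[X]) (hM : M ≠ 0)
    (hq : ¬ (Fintype.card Fq = 2 ∧ X * (X + 1) ∣ M)) (f : Fq[X]) :
    ∃ (n : ℕ) (g : Fin n → Fq[X]), (∀ i, IsCoprime (g i) M) ∧ M ∣ (f - ∑ i, g i) := by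
  classical
  suffices h : ∃ g : Fq[X], IsCoprime g M ∧ (IsCoprime (f - g) M ∨
      ∃ g', IsCoprime g' M ∧ IsCoprime (f - g - g') M) by
    obtain ⟨g, hg, h | ⟨g', hg', h⟩⟩ := h
    · refine ⟨2, ![g, f - g], ?_, ?_⟩
      · intro i; fin_cases i
        · exact hg
        · exact h
      · simp
    · refine ⟨3, ![g, g', f - g - g'], ?_, ?_⟩
      · intro i; fin_cases i
        · exact hg
        · exact hg'
        · exact h
      · simp [Fin.sum_univ_three]
  have hC : ∀ (P : Fq[X]), Irreducible P → ∀ c : Fq, c ≠ 0 → ¬ P ∣ C c := by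
    intro P hP c hc hd
    exact hP.not_isUnit (isUnit_of_dvd_unit hd (isUnit_C.mpr hc.isUnit))
  by_cases h2 : Fintype.card Fq = 2
  · have hM2 : ¬ (X * (X + 1) ∣ M) := fun h => hq ⟨h2, h⟩
    have hel : ∀ c : Fq, c = 0 ∨ c = 1 := by
      intro c
      have hu : (Finset.univ : Finset Fq) = {0, 1} := by
        symm
        rw [← Finset.card_eq_iff_eq_univ, h2, Finset.card_pair zero_ne_one]
      have := Finset.mem_univ c
      rw [hu] at this
      simpa using this
    have hchar : (1 : Fq) + 1 = 0 := by
      rcases hel (1 + 1) with h | h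
      · exact h
      · exfalso; simp at h
    -- the bad root
    obtain ⟨a, ha⟩ : ∃ a : Fq, ∀ b, b ≠ a → ¬ (X - C b ∣ M) := by
      by_contra! hcon
      obtain ⟨b, hb, hbM⟩ := hcon 0
      obtain ⟨b', hb', hbM'⟩ := hcon 1
      have e1 : b = 1 := (hel b).resolve_left hb
      have e2 : b' = 0 := (hel b').resolve_right hb'
      subst e1 e2
      apply hM2
      have hc : IsCoprime (X : Fq[X]) (X + 1) := ⟨-1, 1, by ring⟩
      refine hc.mul_dvd (by simpa using hbM') ?_
      have : (X - C 1 : Fq[X]) = X + 1 := by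
        have h3 : (C ((1 : Fq) + 1) : Fq[X]) = 0 := by rw [hchar, C_0]
        rw [C_add, C_1] at h3
        rw [C_1]; linear_combination -h3
      rwa [this] at hbM
    have main : ∀ f' : Fq[X], f'.eval a = 0 → ∃ g, IsCoprime g M ∧ IsCoprime (f' - g) M := by
      intro f' hf'
      refine two_units M f' hM ?_
      intro P hP hPM
      by_cases hd : P.natDegree = 1
      · obtain ⟨b, hb⟩ := exists_root_of_degree_eq_one (degree_eq_iff_natDegree_eq_of_pos
          (by norm_num) |>.mpr hd)
        have hbP : X - C b ∣ P := dvd_iff_isRoot.mpr hb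
        have hba : b = a := by
          by_contra hne
          exact ha b hne (hbP.trans hPM)
        subst hba
        refine ⟨1, by simpa using hC P hP 1 one_ne_zero, fun h => ?_⟩
        have := dvd_iff_isRoot.mp (hbP.trans h)
        simp [IsRoot, hf'] at this
      · have hpos := hP.natDegree_pos
        refine local_sol P f' 1 X (by simpa using hC P hP 1 one_ne_zero) ?_ ?_
        · intro h
          have := natDegree_le_of_dvd h X_ne_zero
          rw [natDegree_X] at this; omega
        · intro h
          have h' : P ∣ X - C 1 := by
            rw [← neg_sub, C_1, neg_sub]
            have := (dvd_neg (a := P)).mpr h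
            simpa using this
          have := natDegree_le_of_dvd h' (X_sub_C_ne_zero 1)
          rw [natDegree_X_sub_C] at this; omega
    rcases hel (f.eval a) with h | h
    · obtain ⟨g, h1, h2⟩ := main f h
      exact ⟨g, h1, Or.inl h2⟩
    · obtain ⟨g, h1, h2⟩ := main (f - 1) (by simp [h])
      exact ⟨1, isCoprime_one_left, Or.inr ⟨g, h1, h2⟩⟩
  · have h3 : 2 < Fintype.card Fq := by
      have := Fintype.one_lt_card (α := Fq); omega
    obtain ⟨c, hc⟩ : ∃ c : Fq, c ∉ ({0, 1} : Finset Fq) := by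
      by_contra! hcon
      have := Finset.card_le_card (fun x _ => hcon x : (Finset.univ : Finset Fq) ⊆ {0, 1})
      rw [Finset.card_univ] at this
      have := this.trans Finset.card_le_two
      omega
    simp only [Finset.mem_insert, Finset.mem_singleton, not_or] at hc
    obtain ⟨g, hg1, hg2⟩ := two_units M f hM (fun P hP _ =>
      local_sol P f (C c) (C 1) (hC P hP c hc.1) (hC P hP 1 one_ne_zero)
        (by rw [← C_sub]; exact hC P hP _ (sub_ne_zero.mpr hc.2)))
    exact ⟨g, hg1, Or.inl hg2⟩

end CarlitzAux

namespace CarlitzAux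

section core
variable {Fq : Type} [Field Fq] [Fintype Fq] {k E : Type} [Field k] [Field E]
  [Algebra k E] [Algebra Fq[X] k] [Algebra Fq E] [Algebra Fq[X] E] [IsScalarTower Fq Fq[X] E]
  [IsScalarTower Fq[X] k E]

lemma carl_comm (σ : E ≃ₐ[k] E) (f : Fq[X]) (x : E) :
    σ (carl Fq E f x) = carl Fq E f (σ x) :=
  carl_map ((σ : E →ₐ[k] E).restrictScalars Fq[X]) f x

lemma carl_swap (f g : Fq[X]) (x : E) :
    carl Fq E f (carl Fq E g x) = carl Fq E g (carl Fq E f x) := by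
  rw [← Module.End.mul_apply, ← map_mul, mul_comm, map_mul, Module.End.mul_apply]

/-- `τ` fixes torsion -/
def Fix (M : Fq[X]) (τ : E ≃ₐ[k] E) : Prop := ∀ x : E, carl Fq E M x = 0 → τ x = x

/-- `s` acts on torsion as `B`. -/
def Sig (M : Fq[X]) (s : E ≃ₐ[k] E) (B : Fq[X]) : Prop :=
  ∀ x : E, carl Fq E M x = 0 → s x = carl Fq E B x

lemma carl_congr (M f g : Fq[X]) (h : M ∣ f - g) (x : E) (hx : carl Fq E M x = 0) :
    carl Fq E f x = carl Fq E g x := by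
  obtain ⟨d, hd⟩ := h
  have : f = g + d * M := by linear_combination hd
  rw [this, map_add, LinearMap.add_apply, map_mul, Module.End.mul_apply, hx, map_zero, add_zero]

variable (M : Fq[X]) (Y : Set E)

lemma torsion_diff (hfix : ∀ (σ : E ≃ₐ[k] E), ∀ y ∈ Y, σ y = y) (σ : E ≃ₐ[k] E) (α : E) (hα : carl Fq E M α ∈ Y) :
    carl Fq E M (σ α - α) = 0 := by
  rw [map_sub, ← carl_comm, hfix σ _ hα, sub_self]

lemma prod_spec (hfix : ∀ (σ : E ≃ₐ[k] E), ∀ y ∈ Y, σ y = y) (τ : E ≃ₐ[k] E) (hτ : Fix M τ) (n : ℕ) :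
    ∀ (g : Fin n → Fq[X]) (s : Fin n → (E ≃ₐ[k] E)) (_ : ∀ i, Sig M (s i) (g i))
    (α : E) (_ : carl Fq E M α ∈ Y),
    (List.ofFn (fun i => s i * τ * (s i)⁻¹)).prod α =
      α + carl Fq E (∑ i, g i) (τ α - α) := by
  induction n with
  | zero => intro g s hs α hα; simp
  | succ n ih =>
    intro g s hs α hα
    rw [List.ofFn_succ, List.prod_cons, AlgEquiv.mul_apply,
      ih (fun i => g i.succ) (fun i => s i.succ) (fun i => hs i.succ) α hα, map_add,
      Fin.sum_univ_succ, map_add, LinearMap.add_apply]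
    have htor := torsion_diff M Y hfix τ α hα
    have h1 : ∀ w, carl Fq E M w = 0 → (s 0 * τ * (s 0)⁻¹) w = w := by
      intro w hw
      have h2 : carl Fq E M ((s 0)⁻¹ w) = 0 := by rw [← carl_comm, hw, map_zero]
      rw [AlgEquiv.mul_apply, AlgEquiv.mul_apply, hτ _ h2, ← AlgEquiv.mul_apply, mul_inv_cancel,
        AlgEquiv.one_apply]
    rw [h1 (carl Fq E (∑ i, g (Fin.succ i)) (τ α - α)) (by rw [carl_swap, htor, map_zero])]
    have h3 : (s 0 * τ * (s 0)⁻¹) α = α + carl Fq E (g 0) (τ α - α) := by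
      have h4 := torsion_diff M Y hfix (s 0)⁻¹ α hα
      have h5 := hτ _ h4
      rw [map_sub] at h5
      have h6 : τ ((s 0)⁻¹ α) = (s 0)⁻¹ α + (τ α - α) := by linear_combination h5
      rw [AlgEquiv.mul_apply, AlgEquiv.mul_apply, h6, map_add, hs 0 _ htor,
        ← AlgEquiv.mul_apply, mul_inv_cancel, AlgEquiv.one_apply]
    rw [h3]; ring

lemma core (h0 : (0 : E) ∈ Y) (hfix : ∀ (σ : E ≃ₐ[k] E), ∀ y ∈ Y, σ y = y)
    (hext : ∀ σ σ' : E ≃ₐ[k] E, (∀ α, carl Fq E M α ∈ Y → σ α = σ' α) → σ = σ')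
    (hsig : ∀ B, IsCoprime B M → ∃ s : E ≃ₐ[k] E, Sig M s B)
    (hdec : ∀ f : Fq[X], ∃ (n : ℕ) (g : Fin n → Fq[X]),
      (∀ i, IsCoprime (g i) M) ∧ M ∣ (f - ∑ i, g i)) :
    ∃ c : Fq[X] → (E ≃ₐ[k] E) → (E ≃ₐ[k] E),
      (∀ (f : Fq[X]) (τ : E ≃ₐ[k] E), Fix M τ →
        ∀ (n : ℕ) (g : Fin n → Fq[X]), (∀ i, IsCoprime (g i) M) →
          M ∣ (f - ∑ i, g i) →
          ∀ s : Fin n → (E ≃ₐ[k] E), (∀ i, Sig M (s i) (g i)) →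
            c f τ = (List.ofFn (fun i => s i * τ * (s i)⁻¹)).prod) ∧
      (∀ (f : Fq[X]) (τ : E ≃ₐ[k] E), Fix M τ → ∀ α, carl Fq E M α ∈ Y →
        c f τ α = α + carl Fq E f (τ α - α)) ∧
      (∀ f τ, Fix M τ → Fix M (c f τ)) ∧
      (∀ f τ τ', Fix M τ → Fix M τ' → c f (τ * τ') = c f τ * c f τ') ∧
      (∀ f g τ, Fix M τ → c (f + g) τ = c f τ * c g τ) ∧
      (∀ f g τ, Fix M τ → c (f * g) τ = c f (c g τ)) ∧
      (∀ τ, Fix M τ → c 1 τ = τ) ∧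
      (∀ τ, Fix M τ → c M τ = 1) := by
  have hprod : ∀ (f : Fq[X]) (τ : E ≃ₐ[k] E), Fix M τ →
        ∀ (n : ℕ) (g : Fin n → Fq[X]), (∀ i, IsCoprime (g i) M) →
          M ∣ (f - ∑ i, g i) →
          ∀ s : Fin n → (E ≃ₐ[k] E), (∀ i, Sig M (s i) (g i)) →
            ∀ α, carl Fq E M α ∈ Y → (List.ofFn (fun i => s i * τ * (s i)⁻¹)).prod α =
              α + carl Fq E f (τ α - α) := by
    intro f τ hτ n g hg hd s hs α hα
    rw [prod_spec M Y hfix τ hτ n g s hs α hα,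
      carl_congr M f _ hd _ (torsion_diff M Y hfix τ α hα)]
  have hex : ∀ (f : Fq[X]) (τ : E ≃ₐ[k] E), ∃ ρ : E ≃ₐ[k] E, Fix M τ →
      ∀ α, carl Fq E M α ∈ Y → ρ α = α + carl Fq E f (τ α - α) := by
    intro f τ
    obtain ⟨n, g, hg, hd⟩ := hdec f
    choose s hs using fun i => hsig (g i) (hg i)
    exact ⟨_, fun hτ => hprod f τ hτ n g hg hd s hs⟩
  choose c hc using hex
  have hcfix : ∀ f τ, Fix M τ → Fix M (c f τ) := by
    intro f τ hτ x hx
    rw [hc f τ hτ x (by rw [hx]; exact h0), hτ x hx, sub_self, map_zero, add_zero]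
  have hmul : ∀ τ τ' : E ≃ₐ[k] E, Fix M τ → ∀ α, carl Fq E M α ∈ Y →
      (τ * τ') α = τ α + τ' α - α := by
    intro τ τ' hτ α hα
    have := hτ _ (torsion_diff M Y hfix τ' α hα)
    rw [map_sub] at this
    rw [AlgEquiv.mul_apply]; linear_combination this
  have hfm : ∀ τ τ' : E ≃ₐ[k] E, Fix M τ → Fix M τ' → Fix M (τ * τ') := by
    intro τ τ' h h' x hx
    rw [AlgEquiv.mul_apply, h' x hx, h x hx]
  refine ⟨c, ?_, hc, hcfix, ?_, ?_, ?_, ?_, ?_⟩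
  · intro f τ hτ n g hg hd s hs
    refine hext _ _ fun α hα => ?_
    rw [hc f τ hτ α hα, hprod f τ hτ n g hg hd s hs α hα]
  · intro f τ τ' hτ hτ'
    refine hext _ _ fun α hα => ?_
    rw [hc f _ (hfm _ _ hτ hτ') α hα, hmul _ _ (hcfix f τ hτ) α hα, hmul _ _ hτ α hα,
      hc f τ hτ α hα, hc f τ' hτ' α hα,
      show τ α + τ' α - α - α = (τ α - α) + (τ' α - α) by ring, map_add]
    ring
  · intro f g τ hτ
    refine hext _ _ fun α hα => ?_
    rw [hc _ _ hτ α hα, hmul _ _ (hcfix f τ hτ) α hα,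
      hc f τ hτ α hα, hc g τ hτ α hα, map_add, LinearMap.add_apply]
    ring
  · intro f g τ hτ
    refine hext _ _ fun α hα => ?_
    rw [hc _ _ hτ α hα, hc f _ (hcfix g τ hτ) α hα, hc g τ hτ α hα, add_sub_cancel_left, map_mul,
      Module.End.mul_apply]
  · intro τ hτ
    refine hext _ _ fun α hα => ?_
    rw [hc _ _ hτ α hα, map_one, Module.End.one_apply]; ring
  · intro τ hτ
    refine hext _ _ fun α hα => ?_
    rw [hc _ _ hτ α hα, torsion_diff M Y hfix τ α hα, add_zero, AlgEquiv.one_apply]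

end core

section sigma
variable {Fq : Type} [Field Fq] [Fintype Fq]

instance towerK (K : IntermediateField (RatFunc Fq) (AlgebraicClosure (RatFunc Fq))) :
    IsScalarTower Fq Fq[X] K :=
  ⟨fun a b x => Subtype.ext (smul_assoc a b (x : AlgebraicClosure (RatFunc Fq)))⟩

lemma coe_carl (K : IntermediateField (RatFunc Fq) (AlgebraicClosure (RatFunc Fq)))
    (f : Fq[X]) (x : K) :
    ((carl Fq K f x : K) : AlgebraicClosure (RatFunc Fq)) =
      carl Fq (AlgebraicClosure (RatFunc Fq)) f x :=
  carl_map (K.val.restrictScalars Fq[X]) f x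

lemma algMap_ne {M : Fq[X]} (hM : M ≠ 0) : algebraMap Fq[X] (RatFunc Fq) M ≠ 0 := by
  simpa using hM

lemma sep (M : Fq[X]) (hM : M ≠ 0) (x : AlgebraicClosure (RatFunc Fq))
    (hx : carl Fq _ M x = 0) : IsSeparable (RatFunc Fq) x := by
  have hs : ((cpoly Fq M).map (algebraMap Fq[X] (RatFunc Fq))).Separable := by
    rw [Separable, derivative_map, derivative_cpoly, map_C]
    exact ⟨0, C (algebraMap Fq[X] (RatFunc Fq) M)⁻¹, by
      rw [zero_mul, zero_add, ← C_mul, inv_mul_cancel₀ (algMap_ne hM), C_1]⟩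
  refine Separable.of_dvd hs (minpoly.dvd _ _ ?_)
  rw [aeval_map_algebraMap, aeval_cpoly, hx]

lemma torsion_finite (M : Fq[X]) (hM : M ≠ 0) :
    Finite {x : AlgebraicClosure (RatFunc Fq) | carl Fq _ M x = 0} := by
  have hc : cpoly Fq M ≠ 0 := by
    intro h
    have := (cpoly_degree _ M hM rfl).1
    rw [h, natDegree_zero] at this
    exact (pow_ne_zero _ Fintype.card_ne_zero) this.symm
  refine Set.Finite.subset (rootSet_finite (cpoly Fq M) (AlgebraicClosure (RatFunc Fq))) ?_
  intro x hx
  rw [mem_rootSet_of_injective]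
  · rw [aeval_cpoly]; exact hx
  · rw [IsScalarTower.algebraMap_eq Fq[X] (RatFunc Fq)]
    exact (algebraMap (RatFunc Fq) _).injective.comp (IsFractionRing.injective Fq[X] (RatFunc Fq))
  · exact hc

lemma normal_adjoin (M : Fq[X]) (Y : Set (AlgebraicClosure (RatFunc Fq)))
    (hY : ∀ y ∈ Y, y ∈ Set.range (algebraMap (RatFunc Fq) (AlgebraicClosure (RatFunc Fq)))) :
    Normal (RatFunc Fq) (adjoin (RatFunc Fq)
      {x : AlgebraicClosure (RatFunc Fq) | carl Fq _ M x ∈ Y}) := by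
  rw [normal_iff_forall_map_le']
  intro σ
  rw [adjoin_map]
  apply adjoin.mono
  rintro _ ⟨x, hx, rfl⟩
  have h1 : carl Fq _ M x ∈ Y := hx
  obtain ⟨b, hb⟩ := hY _ h1
  have h2 := carl_comm σ M x
  rw [← hb, AlgEquiv.commutes, hb] at h2
  change carl Fq _ M (σ x) ∈ Y
  rw [← h2]; exact h1

/-- `s` acts on all of torsion as `B`. -/
def SigBar (M B : Fq[X]) : Prop :=
  ∃ s : AlgebraicClosure (RatFunc Fq) ≃ₐ[RatFunc Fq] AlgebraicClosure (RatFunc Fq), Sig M s B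

lemma sigBar_prime (M P : Fq[X]) (hM : M ≠ 0) (hP : Irreducible P) (hm : P.Monic)
    (hPM : ¬ P ∣ M) : SigBar M P := by
  have hset : {x : AlgebraicClosure (RatFunc Fq) | carl Fq _ M x = 0} =
    {x : AlgebraicClosure (RatFunc Fq) | carl Fq _ M x ∈ ({0} : Set _)} := by simp
  let K := adjoin (RatFunc Fq) {x : AlgebraicClosure (RatFunc Fq) | carl Fq _ M x = 0}
  have : Finite {x : AlgebraicClosure (RatFunc Fq) | carl Fq _ M x = 0} := torsion_finite M hM
  have : FiniteDimensional (RatFunc Fq) K :=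
    finiteDimensional_adjoin (fun x _ => Algebra.IsIntegral.isIntegral x)
  have : Normal (RatFunc Fq) K := by
    change Normal (RatFunc Fq) (adjoin (RatFunc Fq)
      {x : AlgebraicClosure (RatFunc Fq) | carl Fq _ M x = 0})
    rw [hset]
    refine normal_adjoin M {0} ?_
    rintro y rfl
    exact ⟨0, map_zero _⟩
  have : Algebra.IsSeparable (RatFunc Fq) K :=
    (isSeparable_adjoin_iff_isSeparable _ _).mpr (fun x hx => sep M hM x hx)
  have : IsGalois (RatFunc Fq) K := ⟨⟩
  obtain ⟨σ, hσ⟩ := frob (L := K) M P hM hP hm hPM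
  refine ⟨σ.liftNormal _, fun x hx => ?_⟩
  have hxK : x ∈ K := subset_adjoin _ _ hx
  have h1 := σ.liftNormal_commutes (AlgebraicClosure (RatFunc Fq)) ⟨x, hxK⟩
  have h2 := hσ ⟨x, hxK⟩ (Subtype.ext ((coe_carl K M _).trans hx))
  rw [h2] at h1
  exact h1.trans (coe_carl K P _)

lemma SigBar.mul {M B B' : Fq[X]} (h : SigBar M B) (h' : SigBar M B') : SigBar M (B * B') := by
  obtain ⟨s, hs⟩ := h
  obtain ⟨s', hs'⟩ := h'
  refine ⟨s * s', fun x hx => ?_⟩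
  rw [AlgEquiv.mul_apply, hs' x hx, hs _ (by rw [carl_swap, hx, map_zero]), map_mul,
    Module.End.mul_apply]

lemma sigBar_monic (M : Fq[X]) (hM : M ≠ 0) (n : ℕ) : ∀ B : Fq[X], B.natDegree = n →
    B.Monic → IsCoprime B M → SigBar M B := by
  induction n using Nat.strong_induction_on with
  | _ n ih =>
    intro B hn hB hc
    by_cases hu : IsUnit B
    · rw [hB.isUnit_iff] at hu
      rw [hu]
      exact ⟨1, fun x _ => by rw [map_one, AlgEquiv.one_apply, Module.End.one_apply]⟩
    · obtain ⟨P, hPm, hP, b, rfl⟩ := exists_monic_irreducible_factor B hu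
      have hb : b.Monic := hPm.of_mul_monic_left hB
      refine (sigBar_prime M P hM hP hPm ?_).mul (ih b.natDegree ?_ b rfl hb hc.of_mul_left_right)
      · intro hd
        exact hP.not_isUnit (hc.of_mul_left_left.isUnit_of_dvd' dvd_rfl hd)
      · rw [← hn, hPm.natDegree_mul hb]
        have := hP.natDegree_pos
        omega

lemma sigBar_all (M : Fq[X]) (hM : M ≠ 0) (B : Fq[X]) (hc : IsCoprime B M) : SigBar M B := by
  have hl : M.leadingCoeff ≠ 0 := by simpa using hM
  set N := M * (C M.leadingCoeff⁻¹ * X ^ (B.natDegree + 1)) with hN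
  have hNm : N.Monic := by
    rw [hN, ← mul_assoc]
    exact (monic_mul_leadingCoeff_inv hM).mul (monic_X_pow _)
  have hNd : B.natDegree < N.natDegree := by
    rw [hN, ← mul_assoc, (monic_mul_leadingCoeff_inv hM).natDegree_mul (monic_X_pow _),
      natDegree_X_pow]; omega
  have hm : (B + N).Monic := hNm.add_of_right (degree_lt_degree hNd)
  obtain ⟨s, hs⟩ := sigBar_monic M hM _ (B + N) rfl hm (by
    rw [hN]; exact IsCoprime.add_mul_left_left hc _)
  refine ⟨s, fun x hx => ?_⟩
  rw [hs x hx]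
  exact carl_congr M _ _ (by rw [add_sub_cancel_left]; exact dvd_mul_right _ _) x hx

end sigma
end CarlitzAux

namespace CarlitzAux

lemma zero_mem_aux {K : Type} [Field K] (Γ : AddSubgroup K) : (0 : K) ∈ {x | x ∈ Γ} :=
  Γ.zero_mem

lemma psi_eq {Fq : Type} [Field Fq] [Fintype Fq]
    (ψ : Polynomial Fq →+* AddMonoid.End (AlgebraicClosure (RatFunc Fq)))
    (hψ : IsCarlitz ψ) (f : Fq[X]) (α : AlgebraicClosure (RatFunc Fq)) :
    ψ f α = carl Fq _ f α := by
  induction f using ind with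
  | hC a =>
    rw [hψ.2, carl_C, IsScalarTower.algebraMap_apply Fq[X] (RatFunc Fq), RatFunc.algebraMap_C]
  | ha f g hf hg => rw [map_add, map_add, LinearMap.add_apply, ← hf, ← hg]; rfl
  | hX f hf =>
    rw [carl_X_mul, ← hf, map_mul, IsScalarTower.algebraMap_apply Fq[X] (RatFunc Fq),
      RatFunc.algebraMap_X, ← hψ.1]; rfl

lemma final {Fq : Type} [Field Fq] [Fintype Fq]
    (ψ : Polynomial Fq →+* AddMonoid.End (AlgebraicClosure (RatFunc Fq)))
    (hψ : IsCarlitz ψ)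
    (M : Polynomial Fq) (hM : M ≠ 0)
    (hq : ¬ (Fintype.card Fq = 2 ∧ X * (X + 1) ∣ M))
    (Y : Set (AlgebraicClosure (RatFunc Fq)))
    (hY : ∀ y ∈ Y, y ∈ Set.range (algebraMap (RatFunc Fq) (AlgebraicClosure (RatFunc Fq))))
    (h0 : 0 ∈ Y)
    (E : IntermediateField (RatFunc Fq) (AlgebraicClosure (RatFunc Fq)))
    (hE : E = adjoin (RatFunc Fq) {x | ψ M x ∈ Y}) :
    (∀ σ σ' : E ≃ₐ[RatFunc Fq] E,
      (∀ α : E, ψ M (α : AlgebraicClosure (RatFunc Fq)) ∈ Y → σ α = σ' α) → σ = σ') ∧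
    (∀ (σ : E ≃ₐ[RatFunc Fq] E) (α : E), ψ M (α : AlgebraicClosure (RatFunc Fq)) ∈ Y →
      ψ M ((σ α : AlgebraicClosure (RatFunc Fq)) - (α : AlgebraicClosure (RatFunc Fq))) = 0) ∧
    ∃ c : Polynomial Fq → (↥E ≃ₐ[RatFunc Fq] ↥E) → (↥E ≃ₐ[RatFunc Fq] ↥E),
      (∀ f τ, FixesTorsion ψ M τ → ∀ α : E, ψ M (α : AlgebraicClosure (RatFunc Fq)) ∈ Y →
        (c f τ α : AlgebraicClosure (RatFunc Fq)) - (α : AlgebraicClosure (RatFunc Fq))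
          = ψ f ((τ α : AlgebraicClosure (RatFunc Fq))
                - (α : AlgebraicClosure (RatFunc Fq)))) ∧
      IsDecompConjAction ψ M c ∧
      (∀ c', IsDecompConjAction ψ M c' →
        ∀ f τ, FixesTorsion ψ M τ → c' f τ = c f τ) ∧
      (∀ f τ, FixesTorsion ψ M τ → FixesTorsion ψ M (c f τ)) ∧
      (∀ f τ τ', FixesTorsion ψ M τ → FixesTorsion ψ M τ' →
        c f (τ * τ') = c f τ * c f τ') ∧
      (∀ f g τ, FixesTorsion ψ M τ → c (f + g) τ = c f τ * c g τ) ∧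
      (∀ f g τ, FixesTorsion ψ M τ → c (f * g) τ = c f (c g τ)) ∧
      (∀ τ, FixesTorsion ψ M τ → c 1 τ = τ) ∧
      (∀ τ, FixesTorsion ψ M τ → c M τ = 1) := by
  have hv : ∀ (f : Fq[X]) (x : E), ψ f (x : AlgebraicClosure (RatFunc Fq)) =
      ((carl Fq E f x : E) : AlgebraicClosure (RatFunc Fq)) := by
    intro f x; rw [psi_eq ψ hψ, coe_carl]
  have hset : {x | ψ M x ∈ Y} = {x | carl Fq (AlgebraicClosure (RatFunc Fq)) M x ∈ Y} := by
    simp only [psi_eq ψ hψ]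
  have hnorm : Normal (RatFunc Fq) E := by
    rw [hE, hset]; exact normal_adjoin M Y hY
  let YE : Set E := {y | (y : AlgebraicClosure (RatFunc Fq)) ∈ Y}
  have hYE : ∀ α : E, ψ M (α : AlgebraicClosure (RatFunc Fq)) ∈ Y ↔ carl Fq E M α ∈ YE := by
    intro α; rw [hv]; rfl
  have hzero : ∀ α : E, ψ M (α : AlgebraicClosure (RatFunc Fq)) = 0 ↔ carl Fq E M α = 0 := by
    intro α; rw [hv]; exact ZeroMemClass.coe_eq_zero
  have hFix : ∀ τ : E ≃ₐ[RatFunc Fq] E, FixesTorsion ψ M τ ↔ Fix M τ := by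
    intro τ
    simp only [FixesTorsion, Fix, hzero]
  have hSig : ∀ (s : E ≃ₐ[RatFunc Fq] E) B, ExtendsSigma ψ M s B ↔ Sig M s B := by
    intro s B
    simp only [ExtendsSigma, Sig, hv, Subtype.coe_inj, ZeroMemClass.coe_eq_zero]
  have hfix : ∀ (σ : E ≃ₐ[RatFunc Fq] E), ∀ y ∈ YE, σ y = y := by
    intro σ y hy
    obtain ⟨b, hb⟩ := hY _ hy
    have : y = algebraMap (RatFunc Fq) E b := Subtype.ext hb.symm
    rw [this, AlgEquiv.commutes]
  have hext : ∀ σ σ' : E ≃ₐ[RatFunc Fq] E, (∀ α, carl Fq E M α ∈ YE → σ α = σ' α) → σ = σ' := by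
    intro σ σ' h
    ext x
    have key : ∀ y (hy : y ∈ adjoin (RatFunc Fq) {x | ψ M x ∈ Y}),
        σ ⟨y, hE ▸ hy⟩ = σ' ⟨y, hE ▸ hy⟩ := by
      intro y hy
      induction hy using adjoin_induction with
      | mem x hx => exact h _ ((hYE _).mp hx)
      | algebraMap b => exact (σ.commutes b).trans (σ'.commutes b).symm
      | add x y hx hy ihx ihy =>
        have := congrArg₂ (· + ·) ihx ihy
        simp only [← map_add] at this
        exact this
      | inv x hx ihx =>
        have := congrArg (·⁻¹) ihx
        simp only [← map_inv₀] at this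
        exact this
      | mul x y hx hy ihx ihy =>
        have := congrArg₂ (· * ·) ihx ihy
        simp only [← map_mul] at this
        exact this
    rw [key x.1 (hE ▸ x.2)]
  have hsig : ∀ B, IsCoprime B M → ∃ s : E ≃ₐ[RatFunc Fq] E, Sig M s B := by
    intro B hB
    obtain ⟨s, hs⟩ := sigBar_all M hM B hB
    refine ⟨s.restrictNormal E, fun x hx => Subtype.ext ?_⟩
    have h1 := s.restrictNormal_commutes E x
    have h2 := hs x (by rw [← coe_carl, hx]; rfl)
    rw [coe_carl, ← h2]
    exact h1
  have hdec := exists_decomp M hM hq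
  obtain ⟨c, h1, h2, h3, h4, h5, h6, h7, h8⟩ := core M YE h0 hfix hext hsig hdec
  refine ⟨?_, ?_, c, ?_, ?_, ?_, ?_, ?_, ?_, ?_, ?_, ?_⟩
  · intro σ σ' h
    exact hext σ σ' fun α hα => h α ((hYE α).mpr hα)
  · intro σ α hα
    have := torsion_diff M YE hfix σ α ((hYE α).mp hα)
    have h' := (hzero _).mpr this
    exact h'
  · intro f τ hτ α hα
    rw [h2 f τ ((hFix τ).mp hτ) α ((hYE α).mp hα)]
    have := hv f (τ α - α)
    rw [show ((τ α - α : E) : AlgebraicClosure (RatFunc Fq)) = (τ α : AlgebraicClosure (RatFunc Fq))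
      - (α : AlgebraicClosure (RatFunc Fq)) from rfl] at this
    rw [this]
    exact add_sub_cancel_left (α : AlgebraicClosure (RatFunc Fq)) _
  · intro f τ hτ n g hg hd s hs
    exact h1 f τ ((hFix τ).mp hτ) n g hg hd s fun i => (hSig _ _).mp (hs i)
  · intro c' hc' f τ hτ
    obtain ⟨n, g, hg, hd⟩ := hdec f
    choose s hs using fun i => hsig (g i) (hg i)
    rw [hc' f τ hτ n g hg hd s fun i => (hSig _ _).mpr (hs i),
      h1 f τ ((hFix τ).mp hτ) n g hg hd s hs]
  · intro f τ hτ
    exact (hFix _).mpr (h3 f τ ((hFix τ).mp hτ))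
  · intro f τ τ' hτ hτ'
    exact h4 f τ τ' ((hFix τ).mp hτ) ((hFix τ').mp hτ')
  · intro f g τ hτ
    exact h5 f g τ ((hFix τ).mp hτ)
  · intro f g τ hτ
    exact h6 f g τ ((hFix τ).mp hτ)
  · intro τ hτ
    exact h7 τ ((hFix τ).mp hτ)
  · intro τ hτ
    exact h8 τ ((hFix τ).mp hτ)

end CarlitzAux

/-- **Proposition 2.3.**
Except for the case `q = 2` and `T(T+1) ∣ M`:
(1) the `A`-action defined by `f · ψ_λ = Σ_i σ_{f_i} · ψ_λ` (for decompositions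
`f ≡ Σ_i f_i (mod M)` with `gcd(f_i, M) = 1`, via the conjugation action) is
well-defined (exists and is independent of the decomposition) and gives an `A`-module
structure on `H_{M,z} = Gal(k_{M,z}/K)` and consequently on `H_{M,Γ} = Gal(k_{M,Γ}/K)`;
(2) the image `H_M` of `H_{M,z}` in `Λ_M` (under `ψ_λ ↦ λ = ψ_λ(α) - α`) is an
`A`-submodule of `Λ_M`, the embedding `H_{M,z} → H_M` is an `A`-module isomorphism, and
`H_{M,z}` and `H_{M,Γ}` are `A`-modules of exponent `M` (annihilated by `M`). -/
theorem carlitz_module_structure_on_kummer_galois_group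
    {Fq : Type} [Field Fq] [Fintype Fq]
    (ψ : Polynomial Fq →+* AddMonoid.End (AlgebraicClosure (RatFunc Fq)))
    (hψ : IsCarlitz ψ)
    (M : Polynomial Fq) (hM : 0 < M.natDegree)
    (hq : ¬ (Fintype.card Fq = 2 ∧ X * (X + 1) ∣ M))
    -- the element z ∈ k and the splitting field k_{M,z} of u^M - z over k
    (z : RatFunc Fq)
    (Ez : IntermediateField (RatFunc Fq) (AlgebraicClosure (RatFunc Fq)))
    (hEz : Ez = adjoin (RatFunc Fq)
        ({x | ψ M x = 0} ∪
         {x | ψ M x = algebraMap (RatFunc Fq) (AlgebraicClosure (RatFunc Fq)) z}))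
    -- Γ : a finitely generated A-submodule of (k, +)
    (Γ : AddSubgroup (AlgebraicClosure (RatFunc Fq)))
    (hΓk : ∀ x ∈ Γ, x ∈ Set.range (algebraMap (RatFunc Fq) (AlgebraicClosure (RatFunc Fq))))
    (hΓA : ∀ (f : Polynomial Fq), ∀ x ∈ Γ, ψ f x ∈ Γ)
    (hΓfg : ∃ (n : ℕ) (a : Fin n → AlgebraicClosure (RatFunc Fq)), (∀ i, a i ∈ Γ) ∧
      ∀ x ∈ Γ, ∃ g : Fin n → Polynomial Fq, x = ∑ i, ψ (g i) (a i))
    -- k_{M,Γ} = k(Λ_M, (1/M)Γ)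
    (EΓ : IntermediateField (RatFunc Fq) (AlgebraicClosure (RatFunc Fq)))
    (hEΓ : EΓ = adjoin (RatFunc Fq) {x | ψ M x ∈ Γ}) :
    -- (1) for H_{M,Γ} :
    (∃ c : Polynomial Fq → (↥EΓ ≃ₐ[RatFunc Fq] ↥EΓ) → (↥EΓ ≃ₐ[RatFunc Fq] ↥EΓ),
      IsDecompConjAction ψ M c ∧
      -- well-definedness: any map defined by the decomposition recipe agrees with c
      (∀ c', IsDecompConjAction ψ M c' →
        ∀ f τ, FixesTorsion ψ M τ → c' f τ = c f τ) ∧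
      -- c preserves H_{M,Γ} and is an A-module structure on it
      (∀ f τ, FixesTorsion ψ M τ → FixesTorsion ψ M (c f τ)) ∧
      (∀ f τ τ', FixesTorsion ψ M τ → FixesTorsion ψ M τ' →
        c f (τ * τ') = c f τ * c f τ') ∧
      (∀ f g τ, FixesTorsion ψ M τ → c (f + g) τ = c f τ * c g τ) ∧
      (∀ f g τ, FixesTorsion ψ M τ → c (f * g) τ = c f (c g τ)) ∧
      (∀ τ, FixesTorsion ψ M τ → c 1 τ = τ) ∧
      -- H_{M,Γ} has exponent M
      (∀ τ, FixesTorsion ψ M τ → c M τ = 1)) ∧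
    -- (1),(2) for H_{M,z} :
    (∃ c : Polynomial Fq → (↥Ez ≃ₐ[RatFunc Fq] ↥Ez) → (↥Ez ≃ₐ[RatFunc Fq] ↥Ez),
      IsDecompConjAction ψ M c ∧
      (∀ c', IsDecompConjAction ψ M c' →
        ∀ f τ, FixesTorsion ψ M τ → c' f τ = c f τ) ∧
      (∀ f τ, FixesTorsion ψ M τ → FixesTorsion ψ M (c f τ)) ∧
      (∀ f τ τ', FixesTorsion ψ M τ → FixesTorsion ψ M τ' →
        c f (τ * τ') = c f τ * c f τ') ∧
      (∀ f g τ, FixesTorsion ψ M τ → c (f + g) τ = c f τ * c g τ) ∧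
      (∀ f g τ, FixesTorsion ψ M τ → c (f * g) τ = c f (c g τ)) ∧
      (∀ τ, FixesTorsion ψ M τ → c 1 τ = τ) ∧
      (∀ τ, FixesTorsion ψ M τ → c M τ = 1) ∧
      -- (2): via the embedding θ : τ ↦ τ(α) - α into Λ_M (for any fixed root α of u^M - z)
      (∀ α : ↥Ez,
        ψ M (α : AlgebraicClosure (RatFunc Fq))
            = algebraMap (RatFunc Fq) (AlgebraicClosure (RatFunc Fq)) z →
        -- θ takes values in Λ_M
        (∀ τ, FixesTorsion ψ M τ →
          ψ M ((τ α : AlgebraicClosure (RatFunc Fq)) - (α : AlgebraicClosure (RatFunc Fq)))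
            = 0) ∧
        -- θ is injective on H_{M,z}
        (∀ τ τ', FixesTorsion ψ M τ → FixesTorsion ψ M τ' →
          (τ α : AlgebraicClosure (RatFunc Fq)) = (τ' α : AlgebraicClosure (RatFunc Fq)) →
          τ = τ') ∧
        -- θ is additive
        (∀ τ τ', FixesTorsion ψ M τ → FixesTorsion ψ M τ' →
          ((τ * τ') α : AlgebraicClosure (RatFunc Fq))
              - (α : AlgebraicClosure (RatFunc Fq))
            = ((τ α : AlgebraicClosure (RatFunc Fq))
                - (α : AlgebraicClosure (RatFunc Fq)))
              + ((τ' α : AlgebraicClosure (RatFunc Fq))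
                - (α : AlgebraicClosure (RatFunc Fq)))) ∧
        -- θ is A-equivariant: θ(f · τ) = (θ τ)^f ; in particular the image H_M of θ is
        -- an A-submodule of Λ_M and θ : H_{M,z} → H_M is an A-module isomorphism
        (∀ f τ, FixesTorsion ψ M τ →
          (c f τ α : AlgebraicClosure (RatFunc Fq)) - (α : AlgebraicClosure (RatFunc Fq))
            = ψ f ((τ α : AlgebraicClosure (RatFunc Fq))
                - (α : AlgebraicClosure (RatFunc Fq)))))) := by
  classical
  have hM0 : M ≠ 0 := by
    rintro rfl
    simp at hM
  constructor
  · obtain ⟨-, -, c, -, h⟩ := CarlitzAux.final ψ hψ M hM0 hq {x | x ∈ Γ} hΓk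
      (CarlitzAux.zero_mem_aux Γ) EΓ hEΓ
    exact ⟨c, h⟩
  · have hset : ({x | ψ M x = 0} ∪
         {x | ψ M x = algebraMap (RatFunc Fq) (AlgebraicClosure (RatFunc Fq)) z}) =
        {x | ψ M x ∈ ({0, algebraMap (RatFunc Fq) (AlgebraicClosure (RatFunc Fq)) z} : Set _)} :=
      Set.ext fun x => Iff.rfl
    rw [hset] at hEz
    obtain ⟨hext, htor, c, hc, h1, h2, h3, h4, h5, h6, h7, h8⟩ :=
      CarlitzAux.final ψ hψ M hM0 hq
        {0, algebraMap (RatFunc Fq) (AlgebraicClosure (RatFunc Fq)) z} (by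
          intro y hy
          rcases hy with rfl | rfl
          · exact ⟨0, map_zero _⟩
          · exact ⟨z, rfl⟩) (Or.inl rfl) Ez hEz
    refine ⟨c, h1, h2, h3, h4, h5, h6, h7, h8, ?_⟩
    intro α hα
    have hαY : ψ M (α : AlgebraicClosure (RatFunc Fq)) ∈
        ({0, algebraMap (RatFunc Fq) (AlgebraicClosure (RatFunc Fq)) z} : Set _) := Or.inr hα
    refine ⟨fun τ _ => htor τ α hαY, ?_, ?_, fun f τ hτ => hc f τ hτ α hαY⟩
    · intro τ τ' hτ hτ' h
      have h' : τ α = τ' α := Subtype.ext h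
      refine hext τ τ' fun β hβ => ?_
      rcases hβ with hβ | hβ
      · rw [hτ β hβ, hτ' β hβ]
      · have ht : ψ M ((β - α : Ez) : AlgebraicClosure (RatFunc Fq)) = 0 := by
          change ψ M ((β : AlgebraicClosure (RatFunc Fq)) - (α : AlgebraicClosure (RatFunc Fq))) = 0
          rw [map_sub, hα, hβ, sub_self]
        have e1 := hτ _ ht
        have e2 := hτ' _ ht
        rw [map_sub] at e1 e2
        rw [← sub_add_cancel (τ β) (τ α), e1, h', ← e2, sub_add_cancel]
    · intro τ τ' hτ hτ'
      have e1 := hτ (τ' α - α) (htor τ' α hαY)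
      rw [map_sub] at e1
      have e2 : (τ * τ') α - α = (τ α - α) + (τ' α - α) := by
        rw [AlgEquiv.mul_apply]; linear_combination e1
      exact congrArg (fun y : Ez => (y : AlgebraicClosure (RatFunc Fq))) e2
end

section
/- Let M ∈ A be nonconstant, and suppose it is not the case that q = 2 and (T | M or T+1 | M). Then the first group cohomology H^1(G(M), Λ_M) vanishes, where G(M) = Gal(k(Λ_M)/k) acts naturally on Λ_M. -/
open Polynomial IntermediateField

set_option synthInstance.maxHeartbeats 1000000
set_option maxHeartbeats 1000000

/-- Coefficients of `φ_{T^n}`. -/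
noncomputable def cc (Fq : Type) [Field Fq] [Fintype Fq] : ℕ → ℕ → Polynomial Fq
  | 0, 0 => 1
  | 0, _ + 1 => 0
  | n + 1, 0 => X * cc Fq n 0
  | n + 1, i + 1 => X * cc Fq n (i + 1) + cc Fq n i ^ Fintype.card Fq

/-- Coefficients of `φ_N`. -/
noncomputable def ca {Fq : Type} [Field Fq] [Fintype Fq] (N : Polynomial Fq) (i : ℕ) :
    Polynomial Fq :=
  ∑ n ∈ Finset.range (N.natDegree + 1), C (N.coeff n) * cc Fq n i

/-- The Carlitz polynomial evaluated in an `A`-algebra. -/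
noncomputable def cz {Fq : Type} [Field Fq] [Fintype Fq] {L : Type} [CommRing L]
    [Algebra (Polynomial Fq) L] (N : Polynomial Fq) (x : L) : L :=
  ∑ i ∈ Finset.range (N.natDegree + 1), algebraMap (Polynomial Fq) L (ca N i) *
    x ^ (Fintype.card Fq) ^ i

section
variable {Fq : Type} [Field Fq] [Fintype Fq]

lemma frob_add {R : Type} [CommRing R] [Algebra Fq R] (x y : R) :
    (x + y) ^ Fintype.card Fq = x ^ Fintype.card Fq + y ^ Fintype.card Fq :=
  map_add (FiniteField.frobeniusAlgHom Fq R) x y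

lemma frob_sub {R : Type} [CommRing R] [Algebra Fq R] (x y : R) :
    (x - y) ^ Fintype.card Fq = x ^ Fintype.card Fq - y ^ Fintype.card Fq :=
  map_sub (FiniteField.frobeniusAlgHom Fq R) x y

lemma frob_sum {R : Type} [CommRing R] [Algebra Fq R] (s : Finset ℕ) (f : ℕ → R) :
    (∑ i ∈ s, f i) ^ Fintype.card Fq = ∑ i ∈ s, f i ^ Fintype.card Fq :=
  map_sum (FiniteField.frobeniusAlgHom Fq R) f s

lemma cc_zero (n : ℕ) : cc Fq n 0 = X ^ n := by
  induction n with
  | zero => simp [cc]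
  | succ n ih => rw [cc, ih, pow_succ']

lemma cc_gt (n i : ℕ) (h : n < i) : cc Fq n i = 0 := by
  induction n generalizing i with
  | zero =>
    obtain ⟨j, rfl⟩ : ∃ j, i = j + 1 := ⟨i - 1, by omega⟩
    rw [cc]
  | succ n ih =>
    obtain ⟨j, rfl⟩ : ∃ j, i = j + 1 := ⟨i - 1, by omega⟩
    rw [cc, ih _ (by omega), ih _ (by omega)]
    simp [Fintype.card_ne_zero]

lemma cc_self (n : ℕ) : cc Fq n n = 1 := by
  induction n with
  | zero => rw [cc]
  | succ n ih => rw [cc, ih, cc_gt _ _ (by omega)]; simp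

lemma cc_rec (n i : ℕ) : cc Fq n (i + 1) * (X ^ (Fintype.card Fq) ^ (i + 1) - X)
    = cc Fq n i ^ Fintype.card Fq - cc Fq n i := by
  induction n generalizing i with
  | zero =>
    cases i with
    | zero => simp [cc]
    | succ i => simp [cc, Fintype.card_ne_zero]
  | succ n ih =>
    have h1 := ih i
    cases i with
    | zero =>
      simp only [cc, mul_pow]
      simp only [zero_add, pow_one] at h1 ⊢
      linear_combination X * h1
    | succ i =>
      have h2 := congrArg (· ^ Fintype.card Fq) (ih i)
      simp only [mul_pow, frob_sub, ← pow_mul, ← pow_succ] at h2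
      rw [cc, cc, frob_add, mul_pow, ← pow_mul, ]
      linear_combination X * h1 + h2

lemma ca_zero (N : Polynomial Fq) : ca N 0 = N := by
  conv_rhs => rw [N.as_sum_range_C_mul_X_pow]
  simp [ca, cc_zero]

lemma ca_top (N : Polynomial Fq) : ca N N.natDegree = C N.leadingCoeff := by
  rw [ca, Finset.sum_range_succ, Finset.sum_eq_zero, cc_self]
  · simp
  · intro i hi
    rw [cc_gt _ _ (Finset.mem_range.1 hi), mul_zero]

lemma ca_rec (N : Polynomial Fq) (i : ℕ) : ca N (i + 1) * (X ^ (Fintype.card Fq) ^ (i + 1) - X)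
    = ca N i ^ Fintype.card Fq - ca N i := by
  rw [ca, ca, frob_sum, Finset.sum_mul, ← Finset.sum_sub_distrib]
  refine Finset.sum_congr rfl fun n _ => ?_
  rw [mul_assoc, cc_rec, mul_pow, ← C_pow, FiniteField.pow_card, mul_sub]

lemma ca_dvd {P : Polynomial Fq} (hP : Irreducible P) (i : ℕ) (hi : i < P.natDegree) :
    P ∣ ca P i := by
  induction i with
  | zero => rw [ca_zero]
  | succ i ih =>
    have h := ih (by omega)
    have h2 : P ∣ ca P (i + 1) * (X ^ (Fintype.card Fq) ^ (i + 1) - X) := by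
      rw [ca_rec]
      exact dvd_sub (dvd_pow h Fintype.card_ne_zero) h
    rcases hP.prime.dvd_or_dvd h2 with h3 | h3
    · exact h3
    · rw [← Nat.card_eq_fintype_card] at h3
      have := hP.natDegree_dvd_of_dvd_X_pow_card_pow_sub_X h3
      exact absurd (Nat.le_of_dvd (by omega) this) (by omega)

lemma cz_map {L L' : Type} [CommRing L] [Algebra (Polynomial Fq) L] [CommRing L']
    [Algebra (Polynomial Fq) L'] (f : L →ₐ[Polynomial Fq] L') (N : Polynomial Fq) (x : L) :
    f (cz N x) = cz N (f x) := by
  simp [cz]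

lemma cz_irred {L : Type} [CommRing L] [Algebra (Polynomial Fq) L] {P : Polynomial Fq}
    (hP : Irreducible P) (hPm : P.Monic) (x : L) :
    algebraMap (Polynomial Fq) L P ∣ cz P x - x ^ (Fintype.card Fq) ^ P.natDegree := by
  rw [cz, Finset.sum_range_succ, ca_top, hPm.leadingCoeff]
  simp only [map_one, one_mul, add_sub_cancel_right]
  refine Finset.dvd_sum fun i hi => ?_
  exact Dvd.dvd.mul_right (_root_.map_dvd _ (ca_dvd hP i (Finset.mem_range.1 hi))) _

lemma cz_lin {L : Type} [CommRing L] [Algebra (Polynomial Fq) L] (N : Polynomial Fq) (x : L) :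
    ∃ y, cz N x = x * (algebraMap (Polynomial Fq) L N + x * y) := by
  rw [cz, Finset.sum_range_succ']
  have : ∀ i ∈ Finset.range N.natDegree, x ^ 2 ∣ algebraMap (Polynomial Fq) L (ca N (i + 1)) *
      x ^ (Fintype.card Fq) ^ (i + 1) := by
    intro i _
    refine Dvd.dvd.mul_left (pow_dvd_pow _ ?_) _
    calc 2 ≤ Fintype.card Fq := Fintype.one_lt_card
      _ ≤ _ := Nat.le_self_pow (by omega) _
  obtain ⟨y, hy⟩ := Finset.dvd_sum this
  refine ⟨y, ?_⟩
  rw [hy, ca_zero]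
  ring

/-- The Carlitz polynomial -/
noncomputable def cp (N : Polynomial Fq) : Polynomial (Polynomial Fq) :=
  ∑ i ∈ Finset.range (N.natDegree + 1), C (ca N i) * X ^ (Fintype.card Fq) ^ i

lemma cp_eval {L : Type} [CommRing L] [Algebra (Polynomial Fq) L] (N : Polynomial Fq) (x : L) :
    aeval x (cp N) = cz N x := by
  simp [cp, cz]

lemma cp_deriv (N : Polynomial Fq) : derivative (cp N) = C N := by
  rw [cp, Finset.sum_range_succ']
  have : ((Fintype.card Fq : ℕ) : Polynomial (Polynomial Fq)) = 0 := by
    rw [← map_natCast ((C : Polynomial Fq →+* Polynomial (Polynomial Fq)).comp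
      (C : Fq →+* Polynomial Fq)), Nat.cast_card_eq_zero, map_zero]
  simp [ca_zero, this, derivative_X_pow]

lemma cp_monic (N : Polynomial Fq) (hN : N ≠ 0) :
    (C (C N.leadingCoeff⁻¹) * cp N).Monic := by
  have h0 : N.leadingCoeff ≠ 0 := by simpa using hN
  rw [cp, Finset.sum_range_succ, mul_add, ca_top, ← mul_assoc, ← C_mul, ← C_mul,
    inv_mul_cancel₀ h0]
  simp only [map_one, one_mul]
  refine Polynomial.Monic.add_of_right (monic_X_pow _) ?_
  rw [degree_X_pow]
  rw [Finset.mul_sum]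
  refine (degree_sum_le _ _).trans_lt ?_
  refine (Finset.sup_lt_iff (by exact WithBot.bot_lt_coe _)).2 fun i hi => ?_
  rw [← mul_assoc, ← C_mul]
  refine (degree_C_mul_X_pow_le _ _).trans_lt ?_
  exact_mod_cast Nat.pow_lt_pow_right Fintype.one_lt_card (Finset.mem_range.1 hi)

lemma cp_integral {L : Type} [CommRing L] [Algebra (Polynomial Fq) L] (N : Polynomial Fq)
    (hN : N ≠ 0) (x : L) (hx : cz N x = 0) : IsIntegral (Polynomial Fq) x :=
  ⟨_, cp_monic N hN, by
    change aeval x _ = 0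
    rw [map_mul, cp_eval, hx, mul_zero]⟩

lemma psi_pow (ψ : Polynomial Fq →+* AddMonoid.End (AlgebraicClosure (RatFunc Fq)))
    (hψ : IsCarlitz ψ) (n m : ℕ) (h : n < m) (α : AlgebraicClosure (RatFunc Fq)) :
    ψ (X ^ n) α = ∑ i ∈ Finset.range m,
      algebraMap (Polynomial Fq) (AlgebraicClosure (RatFunc Fq)) (cc Fq n i) *
        α ^ (Fintype.card Fq) ^ i := by
  induction n generalizing m with
  | zero =>
    obtain ⟨m, rfl⟩ : ∃ j, m = j + 1 := ⟨m - 1, by omega⟩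
    rw [Finset.sum_range_succ']
    simp [cc]
  | succ n ih =>
    obtain ⟨m, rfl⟩ : ∃ j, m = j + 1 := ⟨m - 1, by omega⟩
    have hX : algebraMap (RatFunc Fq) (AlgebraicClosure (RatFunc Fq)) RatFunc.X =
        algebraMap (Polynomial Fq) (AlgebraicClosure (RatFunc Fq)) X := by
      rw [IsScalarTower.algebraMap_apply (Polynomial Fq) (RatFunc Fq), RatFunc.algebraMap_X]
    rw [pow_succ', map_mul]
    change ψ X (ψ (X ^ n) α) = _
    rw [hψ.1, hX]
    conv_lhs => enter [1]; rw [ih (m + 1) (by omega)]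
    conv_lhs => enter [2]; rw [ih m (by omega)]
    rw [frob_sum, Finset.sum_range_succ', Finset.sum_range_succ', mul_add, add_right_comm,
      Finset.mul_sum, ← Finset.sum_add_distrib]
    congr 1
    · refine Finset.sum_congr rfl fun i _ => ?_
      rw [cc, map_add, map_mul, map_pow, mul_pow, ← pow_mul, ← pow_succ]
      ring
    · rw [cc, map_mul]
      ring

lemma psi_cz (ψ : Polynomial Fq →+* AddMonoid.End (AlgebraicClosure (RatFunc Fq)))
    (hψ : IsCarlitz ψ) (N : Polynomial Fq) (α : AlgebraicClosure (RatFunc Fq)) :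
    ψ N α = cz N α := by
  conv_lhs => rw [N.as_sum_range_C_mul_X_pow]
  simp only [cz, ca, map_sum, Finset.sum_mul]
  rw [Finset.sum_comm]
  refine (AddMonoidHom.finsetSum_apply _ _ _).trans ?_
  refine Finset.sum_congr rfl fun n hn => ?_
  have hC : algebraMap (RatFunc Fq) (AlgebraicClosure (RatFunc Fq)) (RatFunc.C (N.coeff n)) =
      algebraMap (Polynomial Fq) (AlgebraicClosure (RatFunc Fq)) (C (N.coeff n)) := by
    rw [IsScalarTower.algebraMap_apply (Polynomial Fq) (RatFunc Fq), RatFunc.algebraMap_C]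
  rw [map_mul]
  change ψ _ (ψ (X ^ n) α) = _
  rw [hψ.2, hC, psi_pow ψ hψ n _ (Finset.mem_range.1 hn), Finset.mul_sum]
  refine Finset.sum_congr rfl fun i _ => ?_
  rw [map_mul, mul_assoc]


lemma exists_frob (F L : Type) [Field F] [Field L] [Algebra (Polynomial Fq) F]
    [IsFractionRing (Polynomial Fq) F] [Algebra F L] [Algebra (Polynomial Fq) L]
    [IsScalarTower (Polynomial Fq) F L] [FiniteDimensional F L] [IsGalois F L]
    {P : Polynomial Fq} (hP : Irreducible P) :
    ∃ (σ : L ≃ₐ[F] L) (Q : Ideal (integralClosure (Polynomial Fq) L)),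
      Q.IsPrime ∧ Q.comap (algebraMap _ _) = Ideal.span {P} ∧
      ∀ x y : integralClosure (Polynomial Fq) L, (y : L) = σ x →
        y - x ^ (Fintype.card Fq) ^ P.natDegree ∈ Q := by
  have hPp : (Ideal.span {P}).IsPrime := (Ideal.span_singleton_prime hP.ne_zero).2 hP.prime
  have : IsIntegralClosure (integralClosure (Polynomial Fq) L) (Polynomial Fq) L := inferInstance
  have hfin : Module.Finite (Polynomial Fq) (integralClosure (Polynomial Fq) L) :=
    IsIntegralClosure.finite (Polynomial Fq) F L _
  have hinj : Function.Injective
      (algebraMap (Polynomial Fq) (integralClosure (Polynomial Fq) L)) := by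
    have h : Function.Injective (algebraMap (Polynomial Fq) L) := by
      rw [IsScalarTower.algebraMap_eq (Polynomial Fq) F L]
      exact (algebraMap F L).injective.comp (IsFractionRing.injective (Polynomial Fq) F)
    intro a b hab
    exact h (congrArg Subtype.val hab)
  obtain ⟨Q, hQ, hQP⟩ := Ideal.exists_ideal_over_prime_of_isIntegral_of_isDomain
    (S := integralClosure (Polynomial Fq) L) (Ideal.span {P})
    (by rw [(RingHom.injective_iff_ker_eq_bot _).1 hinj]; exact bot_le)
  let := IsIntegralClosure.MulSemiringAction (Polynomial Fq) F L
    (integralClosure (Polynomial Fq) L)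
  have : IsFractionRing (integralClosure (Polynomial Fq) L) L :=
    IsIntegralClosure.isFractionRing_of_finite_extension (Polynomial Fq) F L _
  have : SMulCommClass (L ≃ₐ[F] L) (Polynomial Fq) (integralClosure (Polynomial Fq) L) :=
    ⟨fun g a s => map_smul (galRestrict (Polynomial Fq) F L
      (integralClosure (Polynomial Fq) L) g) a s⟩
  have := Algebra.isInvariant_of_isGalois (Polynomial Fq) F L (integralClosure (Polynomial Fq) L)
  have hcard : Nat.card (Polynomial Fq ⧸ Ideal.span {P}) = Fintype.card Fq ^ P.natDegree := by
    have : Module.Finite Fq (AdjoinRoot P) := (AdjoinRoot.powerBasis hP.ne_zero).finite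
    have h := Module.natCard_eq_pow_finrank (K := Fq) (V := AdjoinRoot P)
    rw [(AdjoinRoot.powerBasis hP.ne_zero).finrank, AdjoinRoot.powerBasis_dim,
      Nat.card_eq_fintype_card (α := Fq)] at h
    exact h
  have hfA : Finite (Polynomial Fq ⧸ Q.under (Polynomial Fq)) := by
    change Finite (Polynomial Fq ⧸ Q.comap (algebraMap _ _))
    rw [hQP]
    apply Nat.finite_of_card_ne_zero
    rw [hcard]
    exact pow_ne_zero _ Fintype.card_ne_zero
  have hfQ : Finite (integralClosure (Polynomial Fq) L ⧸ Q) := by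
    have : Module.Finite (Polynomial Fq ⧸ Q.under (Polynomial Fq))
      (integralClosure (Polynomial Fq) L ⧸ Q) := inferInstance
    exact Module.finite_of_finite (Polynomial Fq ⧸ Q.under (Polynomial Fq))
  obtain ⟨σ, hσ⟩ := IsArithFrobAt.exists_of_isInvariant (Polynomial Fq) (L ≃ₐ[F] L) Q
  refine ⟨σ, Q, hQ, hQP, fun x y hxy => ?_⟩
  have h1 := hσ x
  have h2 : Q.under (Polynomial Fq) = Ideal.span {P} := hQP
  rw [h2, hcard] at h1
  have h3 : y = MulSemiringAction.toAlgHom (Polynomial Fq)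
      (integralClosure (Polynomial Fq) L) σ x := by
    apply Subtype.ext
    rw [hxy]
    exact (algebraMap_galRestrict_apply (Polynomial Fq) σ x).symm
  rw [h3]
  exact h1

lemma psi_comm (ψ : Polynomial Fq →+* AddMonoid.End (AlgebraicClosure (RatFunc Fq)))
    (N N' : Polynomial Fq) (x : AlgebraicClosure (RatFunc Fq)) :
    ψ N (ψ N' x) = ψ N' (ψ N x) := by
  change (ψ N * ψ N') x = (ψ N' * ψ N) x
  rw [← map_mul, ← map_mul, mul_comm]

lemma K_galois
    (ψ : Polynomial Fq →+* AddMonoid.End (AlgebraicClosure (RatFunc Fq)))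
    (hψ : IsCarlitz ψ) (M : Polynomial Fq) (hM : 0 < M.natDegree)
    (K : IntermediateField (RatFunc Fq) (AlgebraicClosure (RatFunc Fq)))
    (hK : K = adjoin (RatFunc Fq) {x | ψ M x = 0}) : FiniteDimensional (RatFunc Fq) K ∧ IsGalois (RatFunc Fq) K := by
  have hM0 : M ≠ 0 := by rintro rfl; simp at hM
  let f : Polynomial (RatFunc Fq) := (cp M).map (algebraMap (Polynomial Fq) (RatFunc Fq))
  have hd : derivative f = C (algebraMap (Polynomial Fq) (RatFunc Fq) M) := by
    simp [f, derivative_map, cp_deriv]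
  have hM1 : algebraMap (Polynomial Fq) (RatFunc Fq) M ≠ 0 := by
    simpa using hM0
  have hsep : f.Separable := by
    rw [Polynomial.Separable, hd]
    exact ⟨0, C (algebraMap (Polynomial Fq) (RatFunc Fq) M)⁻¹, by
      rw [← C_mul, inv_mul_cancel₀ hM1]; simp⟩
  have hset : {x | ψ M x = 0} = f.rootSet (AlgebraicClosure (RatFunc Fq)) := by
    ext x
    rw [mem_rootSet_of_ne hsep.ne_zero, Set.mem_ofPred_eq, psi_cz ψ hψ, ← cp_eval, aeval_map_algebraMap]
  rw [hset] at hK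
  have hs : f.IsSplittingField (RatFunc Fq) K := by
    subst hK
    exact adjoin_rootSet_isSplittingField (IsAlgClosed.splits _)
  exact ⟨IsSplittingField.finiteDimensional K f, IsGalois.of_separable_splitting_field hsep⟩

lemma cz_coe (ψ : Polynomial Fq →+* AddMonoid.End (AlgebraicClosure (RatFunc Fq)))
    (hψ : IsCarlitz ψ)
    (K : IntermediateField (RatFunc Fq) (AlgebraicClosure (RatFunc Fq))) (N : Polynomial Fq) (x : K) :
    ((cz N x : K) : AlgebraicClosure (RatFunc Fq)) = ψ N x := by
  rw [psi_cz ψ hψ]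
  exact cz_map (K.val.restrictScalars (Polynomial Fq)) N x

lemma cz_sigma {K : IntermediateField (RatFunc Fq) (AlgebraicClosure (RatFunc Fq))}
    (σ : K ≃ₐ[RatFunc Fq] K) (N : Polynomial Fq) (x : K) :
    σ (cz N x) = cz N (σ x) :=
  cz_map ((σ : K →ₐ[RatFunc Fq] K).restrictScalars (Polynomial Fq)) N x

lemma sigma_irred
    (ψ : Polynomial Fq →+* AddMonoid.End (AlgebraicClosure (RatFunc Fq)))
    (hψ : IsCarlitz ψ) (M : Polynomial Fq) (hM : 0 < M.natDegree)
    (K : IntermediateField (RatFunc Fq) (AlgebraicClosure (RatFunc Fq)))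
    (hK : K = adjoin (RatFunc Fq) {x | ψ M x = 0})
    (P : Polynomial Fq) (hP : Irreducible P) (hPm : P.Monic) (hPM : ¬ P ∣ M) :
    ∃ σ : K ≃ₐ[RatFunc Fq] K, ∀ x : K, cz M x = 0 → σ x = cz P x := by
  obtain ⟨_, _⟩ := K_galois ψ hψ M hM K hK
  have hM0 : M ≠ 0 := by rintro rfl; simp at hM
  obtain ⟨σ, Q, hQ, hQP, hσ⟩ := exists_frob (RatFunc Fq) K hP
  refine ⟨σ, fun x hx => ?_⟩
  have hx' : ψ M (x : AlgebraicClosure (RatFunc Fq)) = 0 := by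
    rw [← cz_coe ψ hψ K, hx]; rfl
  have h1 : cz M (σ x) = 0 := by rw [← cz_sigma, hx, map_zero]
  have h1' : ψ M ((σ x : K) : AlgebraicClosure (RatFunc Fq)) = 0 := by
    rw [← cz_coe ψ hψ K, h1]; rfl
  have h2 : cz M (σ x - cz P x) = 0 := by
    apply Subtype.ext
    rw [cz_coe ψ hψ K]
    push_cast
    rw [map_sub, h1', cz_coe ψ hψ K, psi_comm ψ M P, hx', map_zero, sub_zero]
  let x' : integralClosure (Polynomial Fq) K := ⟨x, cp_integral M hM0 x hx⟩
  let y' : integralClosure (Polynomial Fq) K := ⟨σ x, cp_integral M hM0 _ h1⟩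
  have hval : ∀ (N : Polynomial Fq) (z : integralClosure (Polynomial Fq) K),
      ((cz N z : integralClosure (Polynomial Fq) K) : K) = cz N (z : K) := fun N z =>
    cz_map (integralClosure (Polynomial Fq) K).val N z
  let δ := y' - cz P x'
  have hδv : (δ : K) = σ x - cz P x := by
    simp [δ, y', hval, x']
  have hδ : δ ∈ Q := by
    have h3 := hσ x' y' rfl
    have h4 : cz P x' - x' ^ (Fintype.card Fq) ^ P.natDegree ∈ Q := by
      refine Q.mem_of_dvd (cz_irred hP hPm x') ?_
      rw [← Ideal.mem_comap, hQP]
      exact Ideal.mem_span_singleton_self P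
    have := Q.sub_mem h3 h4
    simpa [δ] using this
  have h5 : cz M δ = 0 := by
    apply Subtype.ext
    rw [hval, hδv, h2]; rfl
  obtain ⟨y, hy⟩ := cz_lin M δ
  rw [h5] at hy
  rcases mul_eq_zero.1 hy.symm with h6 | h6
  · rw [← sub_eq_zero, ← hδv, h6]; rfl
  · exfalso
    apply hPM
    rw [← Ideal.mem_span_singleton, ← hQP, Ideal.mem_comap, eq_neg_of_add_eq_zero_left h6]
    exact Q.neg_mem (Q.mul_mem_right _ hδ)

lemma sigma_monic
    (ψ : Polynomial Fq →+* AddMonoid.End (AlgebraicClosure (RatFunc Fq)))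
    (hψ : IsCarlitz ψ) (M : Polynomial Fq) (hM : 0 < M.natDegree)
    (K : IntermediateField (RatFunc Fq) (AlgebraicClosure (RatFunc Fq)))
    (hK : K = adjoin (RatFunc Fq) {x | ψ M x = 0})
    (n : ℕ) (B : Polynomial Fq) (hn : B.natDegree ≤ n) (hB : B.Monic)
    (hBM : IsCoprime B M) :
    ∃ σ : K ≃ₐ[RatFunc Fq] K, ∀ x : K, cz M x = 0 → σ x = cz B x := by
  have hcomp : ∀ (N N' : Polynomial Fq) (x : K), cz (N * N') x = cz N (cz N' x) := by
    intro N N' x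
    apply Subtype.ext
    rw [cz_coe ψ hψ K, cz_coe ψ hψ K, cz_coe ψ hψ K, map_mul]
    rfl
  have hone : ∃ σ : K ≃ₐ[RatFunc Fq] K, ∀ x : K, cz M x = 0 → σ x = cz (1 : Polynomial Fq) x := by
    refine ⟨1, fun x _ => ?_⟩
    apply Subtype.ext
    rw [cz_coe ψ hψ K]
    simp
  induction n generalizing B with
  | zero =>
    rw [hB.natDegree_eq_zero.1 (by omega)]
    exact hone
  | succ n ih =>
    by_cases hu : IsUnit B
    · rw [hB.isUnit_iff.1 hu]
      exact hone
    obtain ⟨P, hPm, hPi, B', rfl⟩ := exists_monic_irreducible_factor B hu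
    have hB' : B'.Monic := hPm.of_mul_monic_left hB
    have hdeg := hPm.natDegree_mul hB'
    have := hPi.natDegree_pos
    obtain ⟨σ, hσ⟩ := ih B' (by omega) hB' hBM.of_mul_left_right
    obtain ⟨τ, hτ⟩ := sigma_irred ψ hψ M hM K hK P hPi hPm (fun h =>
      hPi.not_isUnit (hBM.of_mul_left_left.isUnit_of_dvd' dvd_rfl h))
    refine ⟨τ * σ, fun x hx => ?_⟩
    have h1 : cz M (σ x) = 0 := by rw [← cz_sigma, hx, map_zero]
    rw [AlgEquiv.mul_apply, hτ _ h1, hσ _ hx, hcomp]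

end


/-- **Proposition 2.7.**
Let `M ∈ A = 𝔽_q[T]` be nonconstant, and suppose it is not the case that `q = 2` and
(`T ∣ M` or `T+1 ∣ M`).  Then `H¹(G(M), Λ_M) = 0`, where `G(M) = Gal(k(Λ_M)/k)` acts
naturally on the `M`-torsion points `Λ_M` of the Carlitz module: explicitly, every
`1`-cocycle `u : G(M) → Λ_M` (i.e. `u(στ) = u(σ) + σ(u(τ))`) is a coboundary (i.e.
there is `λ₀ ∈ Λ_M` with `u(σ) = σ(λ₀) - λ₀` for all `σ`). -/
theorem carlitz_H1_torsion_vanishes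
    {Fq : Type} [Field Fq] [Fintype Fq]
    (ψ : Polynomial Fq →+* AddMonoid.End (AlgebraicClosure (RatFunc Fq)))
    (hψ : IsCarlitz ψ)
    (M : Polynomial Fq) (hM : 0 < M.natDegree)
    (hq : ¬ (Fintype.card Fq = 2 ∧ (X ∣ M ∨ X + 1 ∣ M)))
    -- K = k(Λ_M)
    (K : IntermediateField (RatFunc Fq) (AlgebraicClosure (RatFunc Fq)))
    (hK : K = adjoin (RatFunc Fq) {x | ψ M x = 0})
    -- a 1-cocycle of G(M) = Gal(K/k) with values in Λ_M
    (u : (↥K ≃ₐ[RatFunc Fq] ↥K) → ↥K)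
    (hu_tors : ∀ σ, ψ M ((u σ : AlgebraicClosure (RatFunc Fq))) = 0)
    (hu_cocycle : ∀ σ τ, u (σ * τ) = u σ + σ (u τ)) :
    -- it is a coboundary
    ∃ lam : ↥K, ψ M ((lam : AlgebraicClosure (RatFunc Fq))) = 0 ∧
      ∀ σ, u σ = σ lam - lam := by

  have hM0 : M ≠ 0 := by rintro rfl; simp at hM
  have hl0 : M.leadingCoeff ≠ 0 := by simpa using hM0
  obtain ⟨B, hBm, hB, hB1⟩ : ∃ B : Polynomial Fq, B.Monic ∧ IsCoprime B M ∧
      IsCoprime (B - 1) M := by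
    by_cases h2 : Fintype.card Fq = 2
    · refine ⟨X, monic_X, ?_, ?_⟩
      · exact (irreducible_X.coprime_iff_not_dvd).2 fun h => hq ⟨h2, Or.inl h⟩
      · have h3 : (X - 1 : Polynomial Fq) = X + 1 := by
          have : ((2 : Fq)) = 0 := by
            have := Nat.cast_card_eq_zero Fq
            rwa [h2] at this
          have h4 : (2 : Polynomial Fq) = 0 := by
            rw [← map_ofNat (C : Fq →+* Polynomial Fq) 2, this, C_0]
          linear_combination -h4
        have h4 : Irreducible (X - 1 : Polynomial Fq) := by
          simpa using irreducible_X_sub_C (1 : Fq)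
        refine (h4.coprime_iff_not_dvd).2 fun h => hq ⟨h2, Or.inr ?_⟩
        rwa [← h3]
    · obtain ⟨c, hc0, hc1⟩ : ∃ c : Fq, c ≠ 0 ∧ c ≠ 1 := by
        by_contra! hcon
        apply h2
        classical
        have h3 : (Finset.univ : Finset Fq) = {0, 1} := by
          ext c
          by_cases h : c = 0 <;> simp [h, hcon]
        rw [← Finset.card_univ, h3, Finset.card_pair zero_ne_one]
      have key : ∀ d : Fq, d ≠ 0 → IsCoprime (C M.leadingCoeff⁻¹ * M + C d) M := by
        intro d hd
        refine ⟨C d⁻¹, - (C d⁻¹ * C M.leadingCoeff⁻¹), ?_⟩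
        have : (C d⁻¹ * C d : Polynomial Fq) = 1 := by
          rw [← C_mul, inv_mul_cancel₀ hd, C_1]
        linear_combination this
      refine ⟨C M.leadingCoeff⁻¹ * M + C c, ?_, key c hc0, ?_⟩
      · have hm : (C M.leadingCoeff⁻¹ * M).Monic := by
          rw [Monic, leadingCoeff_mul, leadingCoeff_C, inv_mul_cancel₀ hl0]
        refine hm.add_of_left ?_
        refine degree_C_le.trans_lt ?_
        rw [← natDegree_pos_iff_degree_pos, natDegree_C_mul (inv_ne_zero hl0)]
        exact hM
      · have := key (c - 1) (sub_ne_zero.2 hc1)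
        rwa [C_sub, C_1, ← add_sub_assoc] at this
  obtain ⟨s, hs⟩ := sigma_monic ψ hψ M hM K hK _ B le_rfl hBm hB
  have htors : ∀ x : K, ψ M (x : AlgebraicClosure (RatFunc Fq)) = 0 ↔ cz M x = 0 := by
    intro x
    rw [← cz_coe ψ hψ K]
    exact ⟨fun h => Subtype.ext h, fun h => by rw [h]; rfl⟩
  have hst : ∀ σ : K ≃ₐ[RatFunc Fq] K, ∀ x : K, cz M x = 0 → cz M (σ x) = 0 := by
    intro σ x hx
    rw [← cz_sigma, hx, map_zero]
  -- the Frobenius-type element is central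
  have hcomm : ∀ σ : K ≃ₐ[RatFunc Fq] K, σ * s = s * σ := by
    intro σ
    have hext : ∀ f g : K →ₐ[RatFunc Fq] K, (∀ x : K, cz M x = 0 → f x = g x) → f = g := by
      intro f g hfg
      subst hK
      refine IntermediateField.algHom_ext_of_eq_adjoin _ rfl ?_
      intro x hx
      exact hfg _ ((htors _).1 hx)
    have h := hext ((σ * s : K ≃ₐ[RatFunc Fq] K) : K →ₐ[RatFunc Fq] K)
      ((s * σ : K ≃ₐ[RatFunc Fq] K) : K →ₐ[RatFunc Fq] K) (fun x hx => by
        change σ (s x) = s (σ x)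
        rw [hs x hx, hs _ (hst σ x hx), cz_sigma])
    ext x
    exact congrArg Subtype.val (DFunLike.congr_fun h x)
  obtain ⟨D, E, hDE⟩ := hB1
  have hw : cz M (u s) = 0 := (htors _).1 (hu_tors s)
  have hlam : ψ M ((cz D (u s) : K) : AlgebraicClosure (RatFunc Fq)) = 0 := by
    rw [cz_coe ψ hψ K, psi_comm, hu_tors, map_zero]
  refine ⟨cz D (u s), hlam, fun σ => ?_⟩
  have h1 : u s + cz B (u σ) = u σ + σ (u s) := by
    rw [← hs _ ((htors _).1 (hu_tors σ)), ← hu_cocycle, ← hu_cocycle, hcomm]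
  rw [cz_sigma]
  apply Subtype.ext
  have h2 := congrArg (Subtype.val) h1
  push_cast at h2 ⊢
  rw [cz_coe ψ hψ K] at h2
  rw [cz_coe ψ hψ K, cz_coe ψ hψ K, ← map_sub]
  have h3 : ((σ (u s) : K) : AlgebraicClosure (RatFunc Fq)) - (u s : K) = ψ (B - 1) (u σ : K) := by
    rw [map_sub, map_one]
    change _ = ψ B (u σ : K) - ((u σ : K) : AlgebraicClosure (RatFunc Fq))
    linear_combination -h2
  rw [h3]
  have h4 : ψ (D * (B - 1) + E * M) ((u σ : K) : AlgebraicClosure (RatFunc Fq)) = (u σ : K) := by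
    rw [hDE, map_one]; rfl
  rw [map_add, map_mul, map_mul] at h4
  change ψ D (ψ (B - 1) (u σ : K)) + ψ E (ψ M (u σ : K)) = _ at h4
  rw [hu_tors, map_zero, add_zero] at h4
  exact h4.symm
end

section
/- Suppose q ≠ 2, or q = 2 and T(T+1) ∤ M. The map H_{M,Γ} × Γ → Λ_M given by (σ, a) ↦ ⟨σ, a⟩ = σα − α (where α^M = a) is A-bilinear with respect to the natural A-module structures; its kernel on the left is {1} and its kernel on the right is Γ ∩ K^M, where K^M = {β^M : β ∈ K}. -/
open Polynomial IntermediateField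

set_option synthInstance.maxHeartbeats 1000000
set_option maxHeartbeats 1000000

theorem ck_exists_frob (A k L : Type*) [CommRing A] [IsDomain A] [IsIntegrallyClosed A]
    [IsNoetherianRing A] [Field k] [Field L]
    [Algebra A k] [IsFractionRing A k] [Algebra k L] [Algebra A L] [IsScalarTower A k L]
    [FiniteDimensional k L] [IsGalois k L] (P : Ideal A) [hP : P.IsMaximal] [Finite (A ⧸ P)] :
    ∃ Q : Ideal (integralClosure A L), Q.under A = P ∧ ∃ σ : L ≃ₐ[k] L,
      ∀ x : integralClosure A L, ∃ y ∈ Q, σ (x : L) - (x : L) ^ Nat.card (A ⧸ P) = (y : L) := by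
  have : FaithfulSMul A L := by
    rw [faithfulSMul_iff_algebraMap_injective, IsScalarTower.algebraMap_eq A k L]
    exact (algebraMap k L).injective.comp (IsFractionRing.injective A k)
  have : Module.Finite A (integralClosure A L) := IsIntegralClosure.finite A k L _
  have : FaithfulSMul A (integralClosure A L) := by
    rw [faithfulSMul_iff_algebraMap_injective]
    intro a b h
    apply FaithfulSMul.algebraMap_injective A L
    rw [IsScalarTower.algebraMap_apply A (integralClosure A L) L, h,
      ← IsScalarTower.algebraMap_apply A (integralClosure A L) L]
  obtain ⟨⟨Q, hQ, hQP⟩⟩ : Nonempty (P.primesOver (integralClosure A L)) := inferInstance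
  have hu : Q.under A = P := hQP.over.symm
  refine ⟨Q, hu, ?_⟩
  let := IsIntegralClosure.MulSemiringAction A k L (integralClosure A L)
  have : IsFractionRing (integralClosure A L) L :=
    integralClosure.isFractionRing_of_finite_extension k L
  have : SMulCommClass (L ≃ₐ[k] L) A (integralClosure A L) :=
    ⟨fun g a x => map_smul (galRestrict A k L (integralClosure A L) g) a x⟩
  have : Algebra.IsInvariant A (integralClosure A L) (L ≃ₐ[k] L) :=
    Algebra.isInvariant_of_isGalois A k L _
  have : Finite (integralClosure A L ⧸ Q) := by
    exact Module.finite_of_finite (A ⧸ P)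
  obtain ⟨σ, hσ⟩ := IsArithFrobAt.exists_of_isInvariant A (L ≃ₐ[k] L) Q
  refine ⟨σ, fun x => ⟨_, hσ x, ?_⟩⟩
  rw [hu]
  have := algebraMap_galRestrict_apply (B := integralClosure A L) A σ x
  simp only [AddSubgroupClass.coe_sub, SubmonoidClass.coe_pow]
  congr 1
  exact this.symm

theorem ck_card_quot {Fq : Type} [Field Fq] [Fintype Fq] (P : Polynomial Fq) (hm : P.Monic) :
    Nat.card (Polynomial Fq ⧸ Ideal.span {P}) = Fintype.card Fq ^ P.natDegree := by
  have : Module.Finite Fq (AdjoinRoot P) := (AdjoinRoot.powerBasis' hm).finite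
  change Nat.card (AdjoinRoot P) = _
  rw [Module.natCard_eq_pow_finrank (K := Fq), (AdjoinRoot.powerBasis' hm).finrank,
    Nat.card_eq_fintype_card]
  rfl

/-- Coefficients of the Carlitz polynomial. -/
theorem ck_coeffs {Fq : Type} [Field Fq] [Fintype Fq]
    (ψ : Polynomial Fq →+* AddMonoid.End (AlgebraicClosure (RatFunc Fq)))
    (hψ : IsCarlitz ψ) (n : ℕ) : ∀ f : Polynomial Fq, f.natDegree ≤ n →
    ∃ c : ℕ → Polynomial Fq, c 0 = f ∧
      (∀ i, c (i + 1) * (X ^ (Fintype.card Fq) ^ (i + 1) - X) = c i ^ Fintype.card Fq - c i) ∧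
      (∀ i, n < i → c i = 0) ∧ c n = C (f.coeff n) ∧
      ∀ x, ψ f x = ∑ i ∈ Finset.range (n + 1),
        algebraMap (Polynomial Fq) (AlgebraicClosure (RatFunc Fq)) (c i)
          * x ^ (Fintype.card Fq) ^ i := by
  obtain ⟨p, hp⟩ := CharP.exists Fq
  have : Fact p.Prime := ⟨CharP.char_is_prime Fq p⟩
  obtain ⟨⟨r, hr0⟩, hpp, hr⟩ := FiniteField.card Fq p
  simp only [PNat.mk_coe] at hr
  have : CharP (AlgebraicClosure (RatFunc Fq)) p :=
    charP_of_injective_algebraMap (algebraMap Fq _).injective p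
  have hCX : ∀ (d : Fq), algebraMap (RatFunc Fq) (AlgebraicClosure (RatFunc Fq)) (RatFunc.C d)
      = algebraMap (Polynomial Fq) (AlgebraicClosure (RatFunc Fq)) (C d) := by
    intro d
    rw [IsScalarTower.algebraMap_apply (Polynomial Fq) (RatFunc Fq), RatFunc.algebraMap_C]
  have hX : algebraMap (RatFunc Fq) (AlgebraicClosure (RatFunc Fq)) (RatFunc.X)
      = algebraMap (Polynomial Fq) (AlgebraicClosure (RatFunc Fq)) X := by
    rw [IsScalarTower.algebraMap_apply (Polynomial Fq) (RatFunc Fq), RatFunc.algebraMap_X]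
  have hadd : ∀ a b : Polynomial Fq, (a + b) ^ Fintype.card Fq
      = a ^ Fintype.card Fq + b ^ Fintype.card Fq := by
    intro a b; rw [hr]; exact add_pow_char_pow a b p r
  have hsub : ∀ a b : Polynomial Fq, (a - b) ^ Fintype.card Fq
      = a ^ Fintype.card Fq - b ^ Fintype.card Fq := by
    intro a b; rw [hr]; exact sub_pow_char_pow a b r
  have hC : ∀ d : Fq, (C d : Polynomial Fq) ^ Fintype.card Fq = C d := by
    intro d; rw [← C_pow, FiniteField.pow_card]
  have hsum : ∀ (s : Finset ℕ) (g : ℕ → AlgebraicClosure (RatFunc Fq)),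
      (∑ i ∈ s, g i) ^ Fintype.card Fq = ∑ i ∈ s, g i ^ Fintype.card Fq := by
    intro s g; rw [hr]; exact sum_pow_char_pow p r s g
  have hq0 : Fintype.card Fq ≠ 0 := Fintype.card_ne_zero
  induction n with
  | zero =>
    intro f hf
    obtain ⟨d, rfl⟩ := natDegree_eq_zero.mp (Nat.le_zero.mp hf)
    refine ⟨fun i => if i = 0 then C d else 0, by simp, ?_, ?_, by simp, ?_⟩
    · intro i
      by_cases hi : i = 0
      · simp [hi, hC]
      · simp [hi]
    · intro i hi; simp [hi.ne']
    · intro x; simp [hψ.2, hCX]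
  | succ n ih =>
    intro f hf
    obtain ⟨c, h0, h1, h2, h3, h4⟩ := ih f.divX (by rw [natDegree_divX_eq_natDegree_tsub_one]; omega)
    have hfe := divX_mul_X_add f
    obtain ⟨c', hc0, hcs⟩ : ∃ c' : ℕ → Polynomial Fq, c' 0 = f ∧
        ∀ j, c' (j + 1) = X * c (j + 1) + c j ^ Fintype.card Fq :=
      ⟨fun i => Nat.casesOn i f (fun j => X * c (j + 1) + c j ^ Fintype.card Fq), rfl,
        fun j => rfl⟩
    refine ⟨c', hc0, ?_, ?_, ?_, ?_⟩
    · intro i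
      cases i with
      | zero =>
        rw [hcs, hc0, ← hfe, hadd, hC, ← h0, mul_pow]
        have := h1 0
        simp only [zero_add, pow_one] at this ⊢
        linear_combination X * this
      | succ j =>
        rw [hcs, hcs, hadd, mul_pow]
        have e1 := h1 (j + 1)
        have e2 := congrArg (· ^ Fintype.card Fq) (h1 j)
        simp only [mul_pow, hsub] at e2
        rw [← pow_mul, ← pow_succ] at e2
        linear_combination X * e1 + e2
    · intro i hi
      cases i with
      | zero => omega
      | succ j => simp [hcs, h2 j (by omega), h2 (j + 1) (by omega), hq0]
    · simp [hcs, h2 (n + 1) (by omega), h3, hC]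
    · intro x
      have hx : ψ f x = ψ X (ψ f.divX x) + ψ (C (f.coeff 0)) x := by
        conv_lhs => rw [← hfe, mul_comm, map_add, map_mul]
        rfl
      rw [hx, hψ.1, hψ.2, h4, hCX, hX, Finset.sum_range_succ' _ (n + 1), hsum]
      simp only [hcs, hc0, map_add, map_mul, map_pow, add_mul, Finset.sum_add_distrib]
      rw [Finset.sum_range_succ (fun i => _ * algebraMap _ _ (c (i + 1)) * _), h2 (n + 1) (by omega)]
      rw [Finset.sum_range_succ' _ n, mul_add, Finset.mul_sum, h0]
      conv_rhs => rw [← hfe]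
      simp only [mul_pow, ← pow_mul, ← pow_succ, map_add, map_mul, pow_zero, pow_one, add_mul, map_zero, mul_zero, zero_mul, mul_assoc]
      ring

theorem ck_inj (Fq : Type) [Field Fq] : Function.Injective
    (algebraMap (Polynomial Fq) (AlgebraicClosure (RatFunc Fq))) := by
  rw [IsScalarTower.algebraMap_eq (Polynomial Fq) (RatFunc Fq)]
  exact (algebraMap (RatFunc Fq) _).injective.comp (IsFractionRing.injective _ _)

theorem ck_comm {Fq : Type} [Field Fq] [Fintype Fq]
    (ψ : Polynomial Fq →+* AddMonoid.End (AlgebraicClosure (RatFunc Fq)))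
    (hψ : IsCarlitz ψ) (f : Polynomial Fq)
    (σ : AlgebraicClosure (RatFunc Fq) ≃ₐ[RatFunc Fq] AlgebraicClosure (RatFunc Fq))
    (x : AlgebraicClosure (RatFunc Fq)) : σ (ψ f x) = ψ f (σ x) := by
  obtain ⟨c, -, -, -, -, h⟩ := ck_coeffs ψ hψ _ f le_rfl
  rw [h, h, map_sum]
  refine Finset.sum_congr rfl fun i _ => ?_
  rw [map_mul, map_pow, IsScalarTower.algebraMap_apply (Polynomial Fq) (RatFunc Fq),
    AlgEquiv.commutes]

theorem ck_poly {Fq : Type} [Field Fq] [Fintype Fq]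
    (ψ : Polynomial Fq →+* AddMonoid.End (AlgebraicClosure (RatFunc Fq)))
    (hψ : IsCarlitz ψ) (M : Polynomial Fq) (hM : M ≠ 0) :
    ∃ F : Polynomial (Polynomial Fq), (∀ x, ψ M x = aeval x F) ∧ derivative F = C M ∧
      0 < F.natDegree ∧ IsUnit F.leadingCoeff := by
  obtain ⟨c, h0, -, -, h3, h⟩ := ck_coeffs ψ hψ _ M le_rfl
  have hq : 1 < Fintype.card Fq := Fintype.one_lt_card
  have hdeg : (∑ i ∈ Finset.range M.natDegree,
      (C (c i) * X ^ (Fintype.card Fq) ^ i : Polynomial (Polynomial Fq))).degree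
      < ((Fintype.card Fq ^ M.natDegree : ℕ) : WithBot ℕ) := by
    rw [degree_lt_iff_coeff_zero]
    intro m hm
    rw [finsetSum_coeff]
    refine Finset.sum_eq_zero fun i hi => ?_
    rw [coeff_C_mul, coeff_X_pow, if_neg, mul_zero]
    have := Nat.pow_lt_pow_right hq (Finset.mem_range.mp hi)
    omega
  have hlc : M.leadingCoeff ≠ 0 := leadingCoeff_ne_zero.mpr hM
  have hcn : c M.natDegree ≠ 0 := by rw [h3]; simpa using hM
  have htop : (C (c M.natDegree) * X ^ (Fintype.card Fq) ^ M.natDegree :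
      Polynomial (Polynomial Fq)).degree = ((Fintype.card Fq ^ M.natDegree : ℕ) : WithBot ℕ) :=
    degree_C_mul_X_pow _ hcn
  refine ⟨∑ i ∈ Finset.range (M.natDegree + 1), C (c i) * X ^ (Fintype.card Fq) ^ i, ?_, ?_, ?_, ?_⟩
  · intro x
    simp [h, map_sum]
  · rw [derivative_sum, Finset.sum_range_succ', Finset.sum_eq_zero, h0]
    · simp
    · intro i _
      have : ((Fintype.card Fq : ℕ) : Polynomial (Polynomial Fq)) = 0 := by
        have h1 : ((Fintype.card Fq : ℕ) : Fq) = 0 := FiniteField.cast_card_eq_zero Fq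
        rw [← map_natCast (C : Polynomial Fq →+* _), ← map_natCast (C : Fq →+* _), h1, C_0, C_0]
      simp [derivative_X_pow, this]
  · rw [Finset.sum_range_succ, natDegree_eq_of_degree_eq_some
      ((degree_add_eq_right_of_degree_lt (hdeg.trans_eq htop.symm)).trans htop)]
    positivity
  · rw [Finset.sum_range_succ, leadingCoeff_add_of_degree_lt (hdeg.trans_eq htop.symm),
      leadingCoeff_C_mul_X_pow, h3]
    exact (isUnit_iff_ne_zero.mpr hlc).map C

theorem ck_surj {Fq : Type} [Field Fq] [Fintype Fq]
    (ψ : Polynomial Fq →+* AddMonoid.End (AlgebraicClosure (RatFunc Fq)))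
    (hψ : IsCarlitz ψ) (M : Polynomial Fq) (hM : M ≠ 0) (a : AlgebraicClosure (RatFunc Fq)) :
    ∃ x, ψ M x = a := by
  obtain ⟨F, h, -, h1, h2⟩ := ck_poly ψ hψ M hM
  have hinj : Function.Injective
      (algebraMap (Polynomial Fq) (AlgebraicClosure (RatFunc Fq))) :=
    ck_inj Fq
  obtain ⟨x, hx⟩ := IsAlgClosed.exists_root
    (F.map (algebraMap (Polynomial Fq) (AlgebraicClosure (RatFunc Fq))) - C a) (by
      rw [degree_sub_C]
      · rw [degree_map_eq_of_injective hinj]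
        exact (natDegree_pos_iff_degree_pos.mp h1).ne'
      · rw [degree_map_eq_of_injective hinj]
        exact natDegree_pos_iff_degree_pos.mp h1)
  refine ⟨x, ?_⟩
  rw [h, aeval_def, ← eval_map]
  simpa [sub_eq_zero] using hx

theorem ck_integral {Fq : Type} [Field Fq] [Fintype Fq]
    (ψ : Polynomial Fq →+* AddMonoid.End (AlgebraicClosure (RatFunc Fq)))
    (hψ : IsCarlitz ψ) (M : Polynomial Fq) (hM : M ≠ 0) (x : AlgebraicClosure (RatFunc Fq))
    (hx : ψ M x = 0) : IsIntegral (Polynomial Fq) x := by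
  obtain ⟨F, h, -, h1, h2⟩ := ck_poly ψ hψ M hM
  obtain ⟨u, hu⟩ := h2
  refine ⟨C ((u⁻¹ : (Polynomial Fq)ˣ) : Polynomial Fq) * F, ?_, ?_⟩
  · rw [Monic, leadingCoeff_mul, leadingCoeff_C, ← hu]; simp
  · rw [← aeval_def, map_mul, ← h, hx, mul_zero]

theorem ck_finite {Fq : Type} [Field Fq] [Fintype Fq]
    (ψ : Polynomial Fq →+* AddMonoid.End (AlgebraicClosure (RatFunc Fq)))
    (hψ : IsCarlitz ψ) (M : Polynomial Fq) (hM : M ≠ 0) : {x | ψ M x = 0}.Finite := by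
  obtain ⟨F, h, -, h1, h2⟩ := ck_poly ψ hψ M hM
  have : FaithfulSMul (Polynomial Fq) (AlgebraicClosure (RatFunc Fq)) :=
    (faithfulSMul_iff_algebraMap_injective _ _).mpr (ck_inj Fq)
  have : Module.IsTorsionFree (Polynomial Fq) (AlgebraicClosure (RatFunc Fq)) := by
    exact FaithfulSMul.to_isTorsionFree _ _
  have hF : F ≠ 0 := by rintro rfl; simp at h1
  refine (rootSet_finite F (AlgebraicClosure (RatFunc Fq))).subset fun x hx => ?_
  rw [mem_rootSet]
  exact ⟨hF, by rw [← h]; exact hx⟩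

theorem ck_sep {Fq : Type} [Field Fq] [Fintype Fq]
    (ψ : Polynomial Fq →+* AddMonoid.End (AlgebraicClosure (RatFunc Fq)))
    (hψ : IsCarlitz ψ) (M : Polynomial Fq) (hM : M ≠ 0) (x : AlgebraicClosure (RatFunc Fq))
    (a : RatFunc Fq) (hx : ψ M x = algebraMap _ _ a) : IsSeparable (RatFunc Fq) x := by
  obtain ⟨F, h, hd, h1, h2⟩ := ck_poly ψ hψ M hM
  have hs : (F.map (algebraMap (Polynomial Fq) (RatFunc Fq)) - C a).Separable := by
    rw [Polynomial.Separable, derivative_sub, derivative_map, hd, derivative_C, sub_zero, map_C]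
    refine ⟨0, C (algebraMap (Polynomial Fq) (RatFunc Fq) M)⁻¹, ?_⟩
    rw [zero_mul, zero_add, ← C_mul, inv_mul_cancel₀, C_1]
    exact (map_ne_zero_iff _ (IsFractionRing.injective _ _)).mpr hM
  refine hs.of_dvd (minpoly.dvd _ _ ?_)
  rw [map_sub, aeval_map_algebraMap, ← h, hx, aeval_C, sub_self]

theorem ck_normal {k L : Type*} [Field k] [Field L] [Algebra k L] [Normal k L] (S : Set L)
    (hS : ∀ (σ : L ≃ₐ[k] L), ∀ x ∈ S, σ x ∈ S) : Normal k (adjoin k S) := by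
  rw [IntermediateField.normal_iff_forall_map_le']
  intro σ
  rw [adjoin_map]
  refine adjoin.mono _ _ _ ?_
  rintro _ ⟨x, hx, rfl⟩
  exact hS σ x hx

theorem ck_frob {Fq : Type} [Field Fq] [Fintype Fq]
    (ψ : Polynomial Fq →+* AddMonoid.End (AlgebraicClosure (RatFunc Fq)))
    (hψ : IsCarlitz ψ) (M : Polynomial Fq) (hM : M ≠ 0) (P : Polynomial Fq) (hPm : P.Monic)
    (hPi : Irreducible P) (hPM : ¬ P ∣ M) :
    ∃ s : AlgebraicClosure (RatFunc Fq) ≃ₐ[RatFunc Fq] AlgebraicClosure (RatFunc Fq),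
      ∀ x, ψ M x = 0 → s x = ψ P x := by
  obtain ⟨K, hK⟩ : ∃ K, K = adjoin (RatFunc Fq) {x | ψ M x = 0} := ⟨_, rfl⟩
  have hN : Normal (RatFunc Fq) K := by
    rw [hK]
    refine ck_normal _ fun σ x hx => ?_
    rw [Set.mem_ofPred_eq, ← ck_comm ψ hψ, hx, map_zero]
  have hsep : Algebra.IsSeparable (RatFunc Fq) K := by
    rw [hK, isSeparable_adjoin_iff_isSeparable]
    intro x hx
    exact ck_sep ψ hψ M hM x 0 (by rw [map_zero]; exact hx)
  have hfin : FiniteDimensional (RatFunc Fq) K := by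
    rw [hK]
    have := (ck_finite ψ hψ M hM).to_subtype
    exact finiteDimensional_adjoin fun x _ => Algebra.IsIntegral.isIntegral x
  have hgal : IsGalois (RatFunc Fq) K := ⟨⟩
  have htow : IsScalarTower (Polynomial Fq) K (AlgebraicClosure (RatFunc Fq)) := by
    refine IsScalarTower.of_algebraMap_eq fun f => ?_
    rw [IsScalarTower.algebraMap_apply (Polynomial Fq) (RatFunc Fq) (AlgebraicClosure _),
      IsScalarTower.algebraMap_apply (Polynomial Fq) (RatFunc Fq) K]
    rfl
  have hmax : (Ideal.span {P}).IsMaximal := PrincipalIdealRing.isMaximal_of_irreducible hPi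
  have hcard := ck_card_quot P hPm
  have : Finite (Polynomial Fq ⧸ Ideal.span {P}) :=
    Nat.finite_of_card_ne_zero (by rw [hcard]; positivity)
  obtain ⟨Q, hQ, σ, hσ⟩ := ck_exists_frob (Polynomial Fq) (RatFunc Fq) K (Ideal.span {P})
  rw [hcard] at hσ
  have hq : 1 < Fintype.card Fq := Fintype.one_lt_card
  have hmemQ : ∀ f, algebraMap (Polynomial Fq) (integralClosure (Polynomial Fq) K) f ∈ Q ↔
      P ∣ f := by
    intro f
    rw [← Ideal.mem_span_singleton, ← hQ]; rfl
  refine ⟨σ.liftNormal _, fun x hx => ?_⟩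
  have hxK : x ∈ K := by rw [hK]; exact subset_adjoin _ _ hx
  have hxi : IsIntegral (Polynomial Fq) (⟨x, hxK⟩ : K) := by
    have := ck_integral ψ hψ M hM x hx
    exact (isIntegral_algebraMap_iff (A := K) (algebraMap K _).injective).mp this
  let xS : integralClosure (Polynomial Fq) K := ⟨⟨x, hxK⟩, hxi⟩
  obtain ⟨y, hyQ, hy⟩ := hσ xS
  -- `ψ P x = x ^ (q ^ d) + P z`
  obtain ⟨c, hc0, hc1, -, hc3, hc⟩ := ck_coeffs ψ hψ _ P le_rfl
  have hdvd : ∀ i, i < P.natDegree → P ∣ c i := by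
    intro i
    induction i with
    | zero => intro _; rw [hc0]
    | succ i ih =>
      intro hi
      have h1 : P ∣ c (i + 1) * (X ^ (Fintype.card Fq) ^ (i + 1) - X) := by
        rw [hc1]
        have := ih (by omega)
        exact dvd_sub (this.trans (dvd_pow_self _ (by omega))) this
      refine (hPi.prime.dvd_or_dvd h1).resolve_right fun h2 => ?_
      rw [← Nat.card_eq_fintype_card] at h2
      have := Nat.le_of_dvd (by omega) (hPi.natDegree_dvd_of_dvd_X_pow_card_pow_sub_X h2)
      omega
  choose! e he using hdvd
  let zS : integralClosure (Polynomial Fq) K := ∑ i ∈ Finset.range P.natDegree,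
    algebraMap (Polynomial Fq) _ (e i) * xS ^ (Fintype.card Fq) ^ i
  let φ : integralClosure (Polynomial Fq) K →ₐ[Polynomial Fq] AlgebraicClosure (RatFunc Fq) :=
    (IsScalarTower.toAlgHom (Polynomial Fq) K _).comp (integralClosure (Polynomial Fq) K).val
  have hφinj : Function.Injective φ := fun a b h => Subtype.ext (Subtype.ext h)
  have hφx : φ xS = x := rfl
  have hz : ψ P x = x ^ (Fintype.card Fq) ^ P.natDegree
      + φ (algebraMap (Polynomial Fq) _ P * zS) := by
    rw [hc, Finset.sum_range_succ, hc3, hPm.coeff_natDegree, C_1, map_one, one_mul, add_comm]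
    congr 1
    simp only [zS, map_mul, map_sum, map_pow, hφx, AlgHom.commutes, Finset.mul_sum]
    refine Finset.sum_congr rfl fun i hi => ?_
    rw [he i (Finset.mem_range.mp hi), map_mul, mul_assoc]
  let μ : integralClosure (Polynomial Fq) K := y - algebraMap (Polynomial Fq) _ P * zS
  have hμQ : μ ∈ Q := Q.sub_mem hyQ (Q.mul_mem_right _ ((hmemQ P).mpr dvd_rfl))
  have hφy : φ y = σ.liftNormal (AlgebraicClosure (RatFunc Fq)) x
      - x ^ (Fintype.card Fq) ^ P.natDegree := by
    have h1 : φ y = algebraMap K _ (y : K) := rfl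
    rw [h1, ← hy, map_sub, map_pow, ← AlgEquiv.liftNormal_commutes]
    rfl
  have hφμ : φ μ = σ.liftNormal (AlgebraicClosure (RatFunc Fq)) x - ψ P x := by
    rw [map_sub, hφy, hz]; ring
  have hμ0 : ψ M (φ μ) = 0 := by
    rw [hφμ, map_sub, ← ck_comm ψ hψ, hx, map_zero, zero_sub, neg_eq_zero]
    change (ψ M * ψ P) x = 0
    rw [← map_mul, mul_comm, map_mul]
    change ψ P (ψ M x) = 0
    rw [hx, map_zero]
  by_contra hne
  have hμne : μ ≠ 0 := by
    intro h
    rw [h, map_zero] at hφμ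
    exact hne (sub_eq_zero.mp hφμ.symm)
  obtain ⟨b, hb0, -, -, -, hb⟩ := ck_coeffs ψ hψ _ M le_rfl
  have hsum : ∑ i ∈ Finset.range (M.natDegree + 1),
      algebraMap (Polynomial Fq) (integralClosure (Polynomial Fq) K) (b i)
        * μ ^ (Fintype.card Fq) ^ i = 0 := by
    apply hφinj
    rw [map_zero, ← hμ0, hb, map_sum]
    simp only [map_mul, map_pow, AlgHom.commutes]
  rw [Finset.sum_range_succ', hb0, pow_zero, pow_one] at hsum
  have hfac : μ * (algebraMap (Polynomial Fq) _ M + (∑ i ∈ Finset.range M.natDegree,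
      algebraMap (Polynomial Fq) _ (b (i + 1)) * μ ^ ((Fintype.card Fq) ^ (i + 1) - 2)) * μ) = 0 := by
    rw [← hsum, mul_add, add_comm, mul_comm μ (algebraMap _ _ M)]
    congr 1
    rw [mul_left_comm, Finset.sum_mul]
    refine Finset.sum_congr rfl fun i _ => ?_
    have h2 : 2 ≤ Fintype.card Fq ^ (i + 1) :=
      le_trans hq (Nat.le_self_pow (by omega) _)
    conv_rhs => rw [← Nat.sub_add_cancel h2, pow_add]
    ring
  have h3 := (mul_eq_zero.mp hfac).resolve_left hμne
  refine hPM ((hmemQ M).mp ?_)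
  rw [eq_neg_of_add_eq_zero_left h3]
  exact Q.neg_mem (Q.mul_mem_left _ hμQ)

theorem ck_sigma {Fq : Type} [Field Fq] [Fintype Fq]
    (ψ : Polynomial Fq →+* AddMonoid.End (AlgebraicClosure (RatFunc Fq)))
    (hψ : IsCarlitz ψ) (M : Polynomial Fq) (hM : 0 < M.natDegree) (B : Polynomial Fq)
    (hB : IsCoprime B M) :
    ∃ s : AlgebraicClosure (RatFunc Fq) ≃ₐ[RatFunc Fq] AlgebraicClosure (RatFunc Fq),
      ∀ x, ψ M x = 0 → s x = ψ B x := by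
  classical
  have hM0 : M ≠ 0 := by rintro rfl; simp at hM
  have hms : ∀ t : Multiset (Polynomial Fq),
      (∀ P ∈ t, P.Monic ∧ Irreducible P ∧ ¬ P ∣ M) →
      ∃ s : AlgebraicClosure (RatFunc Fq) ≃ₐ[RatFunc Fq] AlgebraicClosure (RatFunc Fq),
      ∀ x, ψ M x = 0 → s x = ψ t.prod x := by
    intro t
    induction t using Multiset.induction_on with
    | empty => intro _; exact ⟨AlgEquiv.refl, fun x _ => by simp⟩
    | cons P t ih =>
      intro h
      obtain ⟨s, hs⟩ := ih fun P hP => h P (Multiset.mem_cons_of_mem hP)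
      obtain ⟨h1, h2, h3⟩ := h P (Multiset.mem_cons_self _ _)
      obtain ⟨s', hs'⟩ := ck_frob ψ hψ M hM0 P h1 h2 h3
      refine ⟨s.trans s', fun x hx => ?_⟩
      rw [AlgEquiv.trans_apply, hs x hx, ck_comm ψ hψ, hs' x hx, Multiset.prod_cons, mul_comm,
        map_mul]
      rfl
  -- a monic representative
  let N := B.natDegree + 1
  let B' := B + M * (X ^ N * C M.leadingCoeff⁻¹)
  have hlc : M.leadingCoeff ≠ 0 := leadingCoeff_ne_zero.mpr hM0
  have hm2 : (M * (X ^ N * C M.leadingCoeff⁻¹)).Monic := by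
    simp [Monic, leadingCoeff_mul, hlc]
    rw [leadingCoeff_X, one_pow]
  have hB'm : B'.Monic := by
    refine hm2.add_of_right ?_
    rw [degree_mul, degree_mul, degree_X_pow, degree_C (inv_ne_zero hlc), add_zero]
    refine degree_le_natDegree.trans_lt ?_
    rw [degree_eq_natDegree hM0]
    norm_cast
    omega
  have hB'c : IsCoprime B' M := IsCoprime.add_mul_left_left hB _
  obtain ⟨s, hs⟩ := hms (UniqueFactorizationMonoid.normalizedFactors B') fun P hP => by
    have hirr := UniqueFactorizationMonoid.irreducible_of_normalized_factor P hP
    refine ⟨?_, hirr, fun hd => ?_⟩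
    · rw [← UniqueFactorizationMonoid.normalize_normalized_factor P hP]
      exact monic_normalize hirr.ne_zero
    · exact hirr.not_isUnit (hB'c.isUnit_of_dvd'
        (UniqueFactorizationMonoid.dvd_of_mem_normalizedFactors hP) hd)
  refine ⟨s, fun x hx => ?_⟩
  rw [hs x hx, UniqueFactorizationMonoid.prod_normalizedFactors_eq hB'm.ne_zero,
    hB'm.normalize_eq_self]
  simp only [B']
  rw [map_add, mul_comm, map_mul]
  change ψ B x + ψ _ (ψ M x) = _
  rw [hx, map_zero, add_zero]

theorem ck_two_units {Fq : Type} [Field Fq] (M : Polynomial Fq) (hM : M ≠ 0) (f : Polynomial Fq)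
    (h : ∀ P : Polynomial Fq, Irreducible P → P ∣ M → ∃ u, ¬ P ∣ u ∧ ¬ P ∣ f - u) :
    ∃ u, IsCoprime u M ∧ IsCoprime (f - u) M := by
  classical
  let S := (UniqueFactorizationMonoid.normalizedFactors M).toFinset
  have hS : ∀ P ∈ S, Irreducible P ∧ P ∣ M := fun P hP =>
    ⟨UniqueFactorizationMonoid.irreducible_of_normalized_factor P (Multiset.mem_toFinset.mp hP),
      UniqueFactorizationMonoid.dvd_of_mem_normalizedFactors (Multiset.mem_toFinset.mp hP)⟩
  have hx : ∀ P : S, ∃ u, ¬ (P : Polynomial Fq) ∣ u ∧ ¬ (P : Polynomial Fq) ∣ f - u :=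
    fun P => h P (hS P P.2).1 (hS P P.2).2
  choose x hx1 hx2 using hx
  obtain ⟨u, hu⟩ := Ideal.exists_forall_sub_mem_ideal
    (I := fun P : S => Ideal.span {(P : Polynomial Fq)}) (by
      intro P P' hne
      simp only [Function.onFun]
      rw [Ideal.isCoprime_span_singleton_iff]
      refine ((hS P P.2).1.isCoprime_or_dvd _).resolve_right fun hd => hne ?_
      have hass := (hS P P.2).1.associated_of_dvd (hS P' P'.2).1 hd
      apply Subtype.ext
      rw [← UniqueFactorizationMonoid.normalize_normalized_factor _
          (Multiset.mem_toFinset.mp P.2), ← UniqueFactorizationMonoid.normalize_normalized_factor _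
          (Multiset.mem_toFinset.mp P'.2)]
      exact normalize_eq_normalize_iff_associated.mpr hass) x
  have key : ∀ P : Polynomial Fq, Irreducible P → P ∣ M → ¬ P ∣ u ∧ ¬ P ∣ f - u := by
    intro P hP hPM
    obtain ⟨P', hP', hass⟩ := UniqueFactorizationMonoid.exists_mem_normalizedFactors_of_dvd hM hP hPM
    have hmem : P' ∈ S := Multiset.mem_toFinset.mpr hP'
    have h1 := Ideal.mem_span_singleton.mp (hu ⟨P', hmem⟩)
    simp only at h1
    rw [hass.dvd_iff_dvd_left, hass.dvd_iff_dvd_left]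
    refine ⟨fun hd => hx1 ⟨P', hmem⟩ ?_, fun hd => hx2 ⟨P', hmem⟩ ?_⟩
    · have := dvd_sub hd h1
      rwa [sub_sub_cancel] at this
    · have := dvd_add hd h1
      rwa [sub_add_sub_cancel] at this
  refine ⟨u, ?_, ?_⟩
  · exact isCoprime_of_irreducible_dvd (fun h => hM h.2) fun z hz hzu hzM => (key z hz hzM).1 hzu
  · exact isCoprime_of_irreducible_dvd (fun h => hM h.2) fun z hz hzu hzM => (key z hz hzM).2 hzu

theorem ck_decomp {Fq : Type} [Field Fq] [Fintype Fq] (M : Polynomial Fq) (hM : M ≠ 0)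
    (hq : ¬ (Fintype.card Fq = 2 ∧ X * (X + 1) ∣ M)) (f : Polynomial Fq) :
    ∃ (n : ℕ) (g : Fin n → Polynomial Fq), (∀ i, IsCoprime (g i) M) ∧ f = ∑ i, g i := by
  classical
  have hconst : ∀ P : Polynomial Fq, Irreducible P → ∀ a : Fq, a ≠ 0 → ¬ P ∣ C a := by
    intro P hP a ha hd
    exact hP.not_isUnit (isUnit_of_dvd_unit hd ((isUnit_iff_ne_zero.mpr ha).map C))
  by_cases h2 : Fintype.card Fq = 2
  · -- every element of `Fq` is `0` or `1`
    have h01 : ∀ a : Fq, a = 0 ∨ a = 1 := by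
      intro a
      by_contra! hne
      have h3 : ({0, 1, a} : Finset Fq).card = 3 := by
        rw [Finset.card_eq_three]
        exact ⟨0, 1, a, zero_ne_one, hne.1.symm, hne.2.symm, rfl⟩
      have := Finset.card_le_univ ({0, 1, a} : Finset Fq)
      omega
    have htwo : (2 : Fq) = 0 := by
      have := FiniteField.cast_card_eq_zero Fq
      rw [h2] at this; exact_mod_cast this
    have hX1 : (X + 1 : Polynomial Fq) = X - C 1 := by
      have : (2 : Polynomial Fq) = 0 := by
        rw [← C_ofNat, htwo, C_0]
      rw [C_1]; linear_combination this
    have hcop : IsCoprime (X : Polynomial Fq) (X + 1) := ⟨-1, 1, by ring⟩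
    -- one of the two linear primes does not divide `M`
    obtain ⟨r, hr⟩ : ∃ r : Fq, ∀ P : Polynomial Fq, Irreducible P → P ∣ M →
        P ∣ X * (X + 1) → Associated P (X - C r) := by
      by_cases hXM : X ∣ M
      · have hX1M : ¬ (X + 1) ∣ M := fun hd => hq ⟨h2, hcop.mul_dvd hXM hd⟩
        refine ⟨0, fun P hP hPM hd => ?_⟩
        rw [C_0, sub_zero]
        rcases hP.prime.dvd_or_dvd hd with h | h
        · exact hP.associated_of_dvd irreducible_X h
        · rw [hX1] at h hX1M
          exact absurd ((hP.associated_of_dvd (irreducible_X_sub_C 1) h).symm.dvd.trans hPM) hX1M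
      · refine ⟨1, fun P hP hPM hd => ?_⟩
        rcases hP.prime.dvd_or_dvd hd with h | h
        · exact absurd ((hP.associated_of_dvd irreducible_X h).symm.dvd.trans hPM) hXM
        · rw [hX1] at h
          exact hP.associated_of_dvd (irreducible_X_sub_C 1) h
    have key : ∀ g : Polynomial Fq, g.eval r = 0 →
        ∃ u, IsCoprime u M ∧ IsCoprime (g - u) M := by
      intro g hg
      refine ck_two_units M hM g fun P hP hPM => ?_
      have h1 : ¬ P ∣ 1 := hP.not_dvd_one
      by_cases hd : P ∣ X * (X + 1)
      · refine ⟨1, h1, fun h => h1 ?_⟩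
        have hPg : P ∣ g := (hr P hP hPM hd).dvd.trans (dvd_iff_isRoot.mpr hg)
        have := dvd_sub hPg h
        rwa [sub_sub_cancel] at this
      · by_cases hg1 : P ∣ g - 1
        · refine ⟨X, fun h => hd (h.mul_right _), fun h => hd (Dvd.dvd.mul_left ?_ _)⟩
          have := dvd_sub hg1 h
          rwa [sub_sub_sub_cancel_left, ← C_1, ← hX1] at this
        · exact ⟨1, h1, hg1⟩
    rcases h01 (f.eval r) with h | h
    · obtain ⟨u, hu1, hu2⟩ := key f h
      exact ⟨2, ![u, f - u], by simp [Fin.forall_fin_two, hu1, hu2], by simp [Fin.sum_univ_two]⟩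
    · obtain ⟨u, hu1, hu2⟩ := key (f - 1) (by simp [h])
      refine ⟨3, ![1, u, f - 1 - u], ?_, by simp [Fin.sum_univ_three]⟩
      intro i
      fin_cases i
      · exact isCoprime_one_left
      · exact hu1
      · exact hu2
  · have hcard : 2 < Fintype.card Fq := by
      have := Fintype.one_lt_card (α := Fq)
      omega
    obtain ⟨a, ha⟩ : ∃ a : Fq, a ∉ ({0, 1} : Finset Fq) := by
      by_contra! hall
      have : (Finset.univ : Finset Fq).card ≤ ({0, 1} : Finset Fq).card :=
        Finset.card_le_card fun x _ => hall x
      have h3 := Finset.card_le_two (a := (0 : Fq)) (b := 1)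
      rw [Finset.card_univ] at this
      omega
    simp only [Finset.mem_insert, Finset.mem_singleton, not_or] at ha
    obtain ⟨u, hu1, hu2⟩ := ck_two_units M hM f fun P hP hPM => by
      by_cases hf1 : P ∣ f - C 1
      · refine ⟨C a, hconst P hP a ha.1, fun h => ?_⟩
        have := dvd_sub hf1 h
        rw [sub_sub_sub_cancel_left, ← C_sub] at this
        exact hconst P hP _ (sub_ne_zero.mpr ha.2) this
      · exact ⟨C 1, hconst P hP 1 one_ne_zero, hf1⟩
    exact ⟨2, ![u, f - u], by simp [Fin.forall_fin_two, hu1, hu2], by simp [Fin.sum_univ_two]⟩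

theorem ck_fix {k L : Type*} [Field k] [Field L] [Algebra k L] (S : Set L) (σ : L ≃ₐ[k] L)
    (hS : ∀ x ∈ S, σ x = x) : ∀ x ∈ adjoin k S, σ x = x := by
  intro x hx
  induction hx using adjoin_induction with
  | mem x hx => exact hS x hx
  | algebraMap x => exact σ.commutes x
  | add x y _ _ hx hy => rw [map_add, hx, hy]
  | inv x _ hx => rw [map_inv₀, hx]
  | mul x y _ _ hx hy => rw [map_mul, hx, hy]

/-- **Proposition 2.8.**
Suppose `q ≠ 2`, or `q = 2` and `T(T+1) ∤ M`.  Let `Γ` be a finitely generated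
`A`-submodule of `(k,+)` (under the Carlitz action), `K = k(Λ_M)`,
`k_{M,Γ} = k(Λ_M, (1/M)Γ)` and `H_{M,Γ} = Gal(k_{M,Γ}/K)` with its natural `A`-module
structure `c`.  The map `H_{M,Γ} × Γ → Λ_M`, `(σ, a) ↦ ⟨σ, a⟩ = σα - α` (where
`α^M = a`) is well defined and `A`-bilinear; its kernel on the left is `{1}` and its
kernel on the right is `Γ ∩ K^M`. -/
theorem carlitz_kummer_pairing
    {Fq : Type} [Field Fq] [Fintype Fq]
    (ψ : Polynomial Fq →+* AddMonoid.End (AlgebraicClosure (RatFunc Fq)))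
    (hψ : IsCarlitz ψ)
    (M : Polynomial Fq) (hM : 0 < M.natDegree)
    (hq : ¬ (Fintype.card Fq = 2 ∧ X * (X + 1) ∣ M))
    -- Γ : a finitely generated A-submodule of (k, +)
    (Γ : AddSubgroup (AlgebraicClosure (RatFunc Fq)))
    (hΓk : ∀ x ∈ Γ, x ∈ Set.range (algebraMap (RatFunc Fq) (AlgebraicClosure (RatFunc Fq))))
    (hΓA : ∀ (f : Polynomial Fq), ∀ x ∈ Γ, ψ f x ∈ Γ)
    (hΓfg : ∃ (n : ℕ) (a : Fin n → AlgebraicClosure (RatFunc Fq)), (∀ i, a i ∈ Γ) ∧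
      ∀ x ∈ Γ, ∃ g : Fin n → Polynomial Fq, x = ∑ i, ψ (g i) (a i))
    -- K = k(Λ_M) and k_{M,Γ} = k(Λ_M, (1/M)Γ)
    (K : IntermediateField (RatFunc Fq) (AlgebraicClosure (RatFunc Fq)))
    (hK : K = adjoin (RatFunc Fq) {x | ψ M x = 0})
    (E : IntermediateField (RatFunc Fq) (AlgebraicClosure (RatFunc Fq)))
    (hE : E = adjoin (RatFunc Fq) {x | ψ M x ∈ Γ})
    -- the natural A-module structure on H_{M,Γ} = Gal(k_{M,Γ}/K)
    (c : Polynomial Fq → (↥E ≃ₐ[RatFunc Fq] ↥E) → (↥E ≃ₐ[RatFunc Fq] ↥E))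
    (hc : IsDecompConjAction ψ M c)
    (hcH : ∀ f τ, FixesTorsion ψ M τ → FixesTorsion ψ M (c f τ)) :
    ∃ p : (↥E ≃ₐ[RatFunc Fq] ↥E) → AlgebraicClosure (RatFunc Fq) →
        AlgebraicClosure (RatFunc Fq),
      -- p computes the pairing ⟨σ, a⟩ = σα - α (independently of the chosen root α)
      (∀ σ, FixesTorsion ψ M σ → ∀ a ∈ Γ, ∀ α : ↥E,
        ψ M (α : AlgebraicClosure (RatFunc Fq)) = a →
        p σ a = (σ α : AlgebraicClosure (RatFunc Fq)) - (α : AlgebraicClosure (RatFunc Fq))) ∧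
      -- with values in Λ_M
      (∀ σ, FixesTorsion ψ M σ → ∀ a ∈ Γ, ψ M (p σ a) = 0) ∧
      -- A-bilinearity
      (∀ σ τ, FixesTorsion ψ M σ → FixesTorsion ψ M τ → ∀ a ∈ Γ,
        p (σ * τ) a = p σ a + p τ a) ∧
      (∀ f σ, FixesTorsion ψ M σ → ∀ a ∈ Γ, p (c f σ) a = ψ f (p σ a)) ∧
      (∀ σ, FixesTorsion ψ M σ → ∀ a ∈ Γ, ∀ b ∈ Γ, p σ (a + b) = p σ a + p σ b) ∧
      (∀ f σ, FixesTorsion ψ M σ → ∀ a ∈ Γ, p σ (ψ f a) = ψ f (p σ a)) ∧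
      -- the kernel on the left is {1}
      (∀ σ, FixesTorsion ψ M σ → (∀ a ∈ Γ, p σ a = 0) → σ = 1) ∧
      -- the kernel on the right is Γ ∩ K^M
      (∀ a ∈ Γ, (∀ σ, FixesTorsion ψ M σ → p σ a = 0) ↔
        ∃ β : AlgebraicClosure (RatFunc Fq), β ∈ K ∧ ψ M β = a) := by
  classical
  have hM0 : M ≠ 0 := by rintro rfl; simp at hM
  have hmul : ∀ f g x, ψ (f * g) x = ψ f (ψ g x) := by
    intro f g x; rw [map_mul]; rfl
  -- `E` is Galois over `k`
  have hN : Normal (RatFunc Fq) E := by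
    rw [hE]
    refine ck_normal _ fun σ x hx => ?_
    obtain ⟨a, ha⟩ := hΓk _ hx
    rw [Set.mem_ofPred_eq, ← ck_comm ψ hψ, ← ha, AlgEquiv.commutes, ha]
    exact hx
  have hsep : Algebra.IsSeparable (RatFunc Fq) E := by
    rw [hE, isSeparable_adjoin_iff_isSeparable]
    intro x hx
    obtain ⟨a, ha⟩ := hΓk _ hx
    exact ck_sep ψ hψ M hM0 x a ha.symm
  have hgal : IsGalois (RatFunc Fq) E := ⟨⟩
  have hmemE : ∀ x, ψ M x ∈ Γ → x ∈ E := by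
    intro x hx; rw [hE]; exact subset_adjoin _ _ hx
  have htorE : ∀ x, ψ M x = 0 → x ∈ E := fun x hx => hmemE x (by rw [hx]; exact Γ.zero_mem)
  -- lifting automorphisms of `E`
  let l : (E ≃ₐ[RatFunc Fq] E) →
      (AlgebraicClosure (RatFunc Fq) ≃ₐ[RatFunc Fq] AlgebraicClosure (RatFunc Fq)) :=
    fun σ => σ.liftNormal _
  have hl : ∀ σ (x : E), l σ (x : AlgebraicClosure (RatFunc Fq)) = (σ x : E) :=
    fun σ x => AlgEquiv.liftNormal_commutes σ _ x
  have hσψ : ∀ (σ : E ≃ₐ[RatFunc Fq] E) f (x : E),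
      ψ f ((σ x : E) : AlgebraicClosure (RatFunc Fq)) = l σ (ψ f x) := by
    intro σ f x; rw [← hl, ck_comm ψ hψ]
  have hlΓ : ∀ σ, ∀ a ∈ Γ, l σ a = a := by
    intro σ a ha
    obtain ⟨b, rfl⟩ := hΓk a ha
    exact AlgEquiv.commutes _ b
  have hdiff : ∀ (σ : E ≃ₐ[RatFunc Fq] E) (α : E),
      ψ M (α : AlgebraicClosure (RatFunc Fq)) ∈ Γ →
      ψ M ((σ α : E) - (α : AlgebraicClosure (RatFunc Fq))) = 0 := by
    intro σ α hα
    rw [map_sub, hσψ, hlΓ σ _ hα, sub_self]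
  let p : (E ≃ₐ[RatFunc Fq] E) → AlgebraicClosure (RatFunc Fq) → AlgebraicClosure (RatFunc Fq) :=
    fun σ a => if h : ∃ α : E, ψ M (α : AlgebraicClosure (RatFunc Fq)) = a then
      ((σ h.choose : E) : AlgebraicClosure (RatFunc Fq)) - (h.choose : E) else 0
  have hp : ∀ σ, FixesTorsion ψ M σ → ∀ a, ∀ α : E,
      ψ M (α : AlgebraicClosure (RatFunc Fq)) = a →
      p σ a = (σ α : AlgebraicClosure (RatFunc Fq)) - (α : AlgebraicClosure (RatFunc Fq)) := by
    intro σ hσ a α hα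
    have h : ∃ α : E, ψ M (α : AlgebraicClosure (RatFunc Fq)) = a := ⟨α, hα⟩
    simp only [p, dif_pos h]
    have h1 := hσ (h.choose - α) (by
      rw [AddSubgroupClass.coe_sub, map_sub, h.choose_spec, hα, sub_self])
    rw [map_sub] at h1
    have h2 := congrArg (fun t : E => (t : AlgebraicClosure (RatFunc Fq))) h1
    simp only [AddSubgroupClass.coe_sub] at h2
    linear_combination h2
  have hroot : ∀ a ∈ Γ, ∃ α : E, ψ M (α : AlgebraicClosure (RatFunc Fq)) = a := by
    intro a ha
    obtain ⟨x, hx⟩ := ck_surj ψ hψ M hM0 a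
    exact ⟨⟨x, hmemE x (hx ▸ ha)⟩, hx⟩
  have hpM : ∀ σ, FixesTorsion ψ M σ → ∀ a ∈ Γ, ψ M (p σ a) = 0 := by
    intro σ hσ a ha
    obtain ⟨α, hα⟩ := hroot a ha
    rw [hp σ hσ a α hα]
    exact hdiff σ α (hα ▸ ha)
  have hFmul : ∀ σ τ : E ≃ₐ[RatFunc Fq] E, FixesTorsion ψ M σ → FixesTorsion ψ M τ →
      FixesTorsion ψ M (σ * τ) := by
    intro σ τ hσ hτ x hx
    rw [AlgEquiv.mul_apply, hτ x hx, hσ x hx]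
  have hF1 : FixesTorsion ψ M (1 : E ≃ₐ[RatFunc Fq] E) := fun x _ => rfl
  have hpmul : ∀ σ τ, FixesTorsion ψ M σ → FixesTorsion ψ M τ → ∀ a ∈ Γ,
        p (σ * τ) a = p σ a + p τ a := by
    intro σ τ hσ hτ a ha
    obtain ⟨α, hα⟩ := hroot a ha
    have hτα : ψ M ((τ α : E) : AlgebraicClosure (RatFunc Fq)) = a := by
      rw [hσψ, hα, hlΓ τ a ha]
    rw [hp _ (hFmul σ τ hσ hτ) a α hα, hp σ hσ a (τ α) hτα, hp τ hτ a α hα, AlgEquiv.mul_apply]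
    ring
  have hp1 : ∀ a ∈ Γ, p 1 a = 0 := by
    intro a ha
    have := hpmul 1 1 hF1 hF1 a ha
    rw [one_mul] at this
    linear_combination -this
  -- conjugation
  have hFconj : ∀ s τ : E ≃ₐ[RatFunc Fq] E, FixesTorsion ψ M τ →
      FixesTorsion ψ M (s * τ * s⁻¹) := by
    intro s τ hτ x hx
    have h1 : τ (s⁻¹ x) = s⁻¹ x := hτ _ (by rw [hσψ, hx, map_zero])
    rw [AlgEquiv.mul_apply, AlgEquiv.mul_apply, h1, ← AlgEquiv.mul_apply, mul_inv_cancel,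
      AlgEquiv.one_apply]
  have hpconj : ∀ s τ g, FixesTorsion ψ M τ → ExtendsSigma ψ M s g → ∀ a ∈ Γ,
      p (s * τ * s⁻¹) a = ψ g (p τ a) := by
    intro s τ g hτ hs a ha
    obtain ⟨α, hα⟩ := hroot a ha
    have hβ : ψ M ((s⁻¹ α : E) : AlgebraicClosure (RatFunc Fq)) = a := by
      rw [hσψ, hα, hlΓ _ a ha]
    rw [hp _ (hFconj s τ hτ) a α hα, hp τ hτ a (s⁻¹ α) hβ]
    have h1 := hs (τ (s⁻¹ α) - s⁻¹ α) (hdiff τ _ (hβ ▸ ha))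
    rw [AddSubgroupClass.coe_sub] at h1
    rw [← h1, map_sub, AddSubgroupClass.coe_sub]
    congr 2
    rw [← AlgEquiv.mul_apply, mul_inv_cancel, AlgEquiv.one_apply]
  have hlist : ∀ L : List (E ≃ₐ[RatFunc Fq] E), (∀ τ ∈ L, FixesTorsion ψ M τ) →
      FixesTorsion ψ M L.prod ∧ ∀ a ∈ Γ, p L.prod a = (L.map fun τ => p τ a).sum := by
    intro L
    induction L with
    | nil => intro _; exact ⟨hF1, fun a ha => by simpa using hp1 a ha⟩
    | cons τ L ih =>
      intro h
      obtain ⟨h1, h2⟩ := ih fun τ' hτ' => h τ' (List.mem_cons_of_mem _ hτ')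
      have h3 := h τ List.mem_cons_self
      rw [List.prod_cons]
      refine ⟨hFmul _ _ h3 h1, fun a ha => ?_⟩
      rw [hpmul _ _ h3 h1 a ha, h2 a ha, List.map_cons, List.sum_cons]
  have hext : ∀ B, IsCoprime B M → ∃ s : E ≃ₐ[RatFunc Fq] E, ExtendsSigma ψ M s B := by
    intro B hB
    obtain ⟨s, hs⟩ := ck_sigma ψ hψ M hM B hB
    refine ⟨s.restrictNormal E, fun x hx => ?_⟩
    rw [← hs x hx]
    exact AlgEquiv.restrictNormal_commutes s E x
  have hpadd : ∀ σ, FixesTorsion ψ M σ → ∀ a ∈ Γ, ∀ b ∈ Γ, p σ (a + b) = p σ a + p σ b := by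
    intro σ hσ a ha b hb
    obtain ⟨α, hα⟩ := hroot a ha
    obtain ⟨β, hβ⟩ := hroot b hb
    rw [hp σ hσ a α hα, hp σ hσ b β hβ, hp σ hσ (a + b) (α + β) (by
      rw [AddMemClass.coe_add, map_add, hα, hβ]), map_add, AddMemClass.coe_add, AddMemClass.coe_add]
    ring
  refine ⟨p, fun σ hσ a _ α hα => hp σ hσ a α hα, hpM, hpmul, ?_, hpadd, ?_, ?_, ?_⟩
  · intro f σ hσ a ha
    obtain ⟨n, g, hg, hf⟩ := ck_decomp M hM0 hq f
    choose s hs using fun i => hext (g i) (hg i)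
    rw [hc f σ hσ n g hg (by rw [hf, sub_self]; exact dvd_zero _) s hs,
      (hlist _ (by
        intro τ hτ
        obtain ⟨i, rfl⟩ := (List.mem_ofFn' _ _).mp hτ
        exact hFconj _ _ hσ)).2 a ha, List.map_ofFn, List.sum_ofFn, hf, map_sum]
    refine Eq.trans ?_ (AddMonoidHom.finsetSum_apply _ _ _).symm
    exact Finset.sum_congr rfl fun i _ => hpconj (s i) σ (g i) hσ (hs i) a ha
  · intro f σ hσ a ha
    obtain ⟨α, hα⟩ := hroot a ha
    have h1 : ψ M (ψ f (α : AlgebraicClosure (RatFunc Fq))) = ψ f a := by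
      rw [← hmul, mul_comm, hmul, hα]
    have h2 : ψ f (α : AlgebraicClosure (RatFunc Fq)) ∈ E := hmemE _ (h1 ▸ hΓA f a ha)
    rw [hp σ hσ a α hα, hp σ hσ (ψ f a) ⟨_, h2⟩ h1, map_sub, hσψ, ← hl]
  · intro σ hσ h
    have h1 : ∀ x ∈ E, l σ x = x := by
      rw [hE]
      refine ck_fix _ _ fun x hx => ?_
      have h2 := h _ hx
      rw [hp σ hσ _ ⟨x, hmemE x hx⟩ rfl, ← hl] at h2
      exact sub_eq_zero.mp h2
    ext x
    rw [← hl, h1 _ x.2]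
    rfl
  · intro a ha
    constructor
    · intro h
      obtain ⟨α, hα⟩ := hroot a ha
      refine ⟨α, ?_, hα⟩
      let K' : IntermediateField (RatFunc Fq) E :=
        adjoin (RatFunc Fq) {x : E | ψ M (x : AlgebraicClosure (RatFunc Fq)) = 0}
      have hαK : α ∈ K' := by
        rw [← InfiniteGalois.fixedField_fixingSubgroup K']
        rintro ⟨σ, hσ⟩
        have hσF : FixesTorsion ψ M σ := fun x hx =>
          (mem_fixingSubgroup_iff K' σ).mp hσ x (subset_adjoin _ _ hx)
        have h1 := h σ hσF
        rw [hp σ hσF a α hα] at h1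
        exact Subtype.ext (sub_eq_zero.mp h1)
      have h2 : K'.map E.val ≤ K := by
        rw [hK, adjoin_map]
        refine adjoin.mono _ _ _ ?_
        rintro _ ⟨x, hx, rfl⟩
        exact hx
      exact h2 ⟨α, hαK, rfl⟩
    · rintro ⟨β, hβK, hβ⟩ σ hσ
      have hβE : β ∈ E := hmemE β (hβ ▸ ha)
      rw [hp σ hσ a ⟨β, hβE⟩ hβ, ← hl, sub_eq_zero]
      rw [hK] at hβK
      refine ck_fix _ (l σ) (fun x hx => ?_) β hβK
      have := hl σ ⟨x, htorE x hx⟩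
      rw [hσ ⟨x, htorE x hx⟩ hx] at this
      exact this
end
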